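/- (Moon) Let H_n denote the number of isomorphism classes of hierarchies of size n, and let H^{(2)}_n denote the number of isomorphism classes of hierarchies of size n containing no subhierarchy of size 2. Then there exist constants C₀ > 0, ρ₀ ∈ (0,1), C₂ > 0, ρ₂ ∈ (0,1) such that H_n ∼ C₀ ρ₀^{-n} n^{-3/2} and H^{(2)}_n ∼ C₂ ρ₂^{-n} n^{-3/2} as n → ∞ (i.e., the ratio of each side tends to 1). -/

import Mathlib

/-- Finite rooted unordered trees, presented with an ordered list of children
(unorderedness is taken care of by the isomorphism relation `RTree.Iso`). -/
inductive RTree : Type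
  | node : List RTree → RTree

/-- The number of leaves (external vertices) of a rooted tree: the *size* of a hierarchy. -/
def RTree.leaves : RTree → ℕ
  | .node [] => 1
  | .node (a :: l) => ((a :: l).attach.map (fun x => RTree.leaves x.1)).sum
decreasing_by
  have := List.sizeOf_lt_of_mem x.2
  simp only [RTree.node.sizeOf_spec]
  omega

/-- A hierarchy: a rooted tree in which no vertex has exactly one child. -/
inductive RTree.IsHierarchy : RTree → Prop
  | node {l : List RTree} : l.length ≠ 1 → (∀ t ∈ l, RTree.IsHierarchy t) →
      RTree.IsHierarchy (.node l)

/-- `s.SubtreeOf t` : `s` is the subtree of `t` rooted at some vertex of `t`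
(that vertex together with all of its descendants). -/
inductive RTree.SubtreeOf : RTree → RTree → Prop
  | refl (t : RTree) : RTree.SubtreeOf t t
  | child {s c : RTree} {l : List RTree} : c ∈ l → RTree.SubtreeOf s c →
      RTree.SubtreeOf s (.node l)

/-- Isomorphism of rooted unordered trees: the children of the two roots can be
matched up bijectively by isomorphisms. -/
inductive RTree.Iso : RTree → RTree → Prop
  | node {l₁ l l₂ : List RTree} (h₁ : List.Forall₂ RTree.Iso l₁ l) (h₂ : l.Perm l₂) :
      RTree.Iso (.node l₁) (.node l₂)

/-- The number of isomorphism classes of hierarchies of size `n` (OEIS A000669). -/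
noncomputable def hierarchyCount (n : ℕ) : ℕ :=
  Nat.card (Quot fun a b : {t : RTree // t.IsHierarchy ∧ t.leaves = n} => RTree.Iso a.1 b.1)

/-- `t` contains no subhierarchy isomorphic to `S`. -/
def RTree.Avoids (t S : RTree) : Prop :=
  ∀ s : RTree, s.SubtreeOf t → ¬ RTree.Iso s S

/-- The number of isomorphism classes of hierarchies of size `n` containing
no subhierarchy isomorphic to `S`. -/
noncomputable def avoidCount (S : RTree) (n : ℕ) : ℕ :=
  Nat.card (Quot fun a b : {t : RTree // t.IsHierarchy ∧ t.leaves = n ∧ t.Avoids S} =>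
    RTree.Iso a.1 b.1)

/-- The number of isomorphism classes of hierarchies of size `n` containing no subhierarchy
of size `2` (OEIS A058385). -/
noncomputable def hierarchyCountNoSize2 (n : ℕ) : ℕ :=
  Nat.card (Quot fun a b : {t : RTree // t.IsHierarchy ∧ t.leaves = n ∧
      ∀ s : RTree, s.SubtreeOf t → s.leaves ≠ 2} => RTree.Iso a.1 b.1)

/-!
A hierarchy of size at least `2` is a multiset of at least two hierarchies. Hence, if `A` is the
generating function of the hierarchies and `M` that of the multisets of hierarchies, then
`M = exp (∑ₖ A(xᵏ) / k)`, and `A = M / 2` up to a polynomial of degree at most `2`. This holds for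
both classes of hierarchies, which differ in that polynomial only. Separating the term `k = 1`
gives `M / 2 * exp (-M / 2) = B`, where `B` is built from the series `A(xᵏ)` with `2 ≤ k`, has
nonnegative coefficients and converges beyond the radius of convergence `R` of `M`; in other words
`M / 2 = T(B)`, where `T` is the tree function.

The singularity of `M` at `R` can only come from that of `T`, so `B(R) = 1 / e`, and `e * B(R x)` is
the generating function of a probability law on `ℕ` with exponential moments. Up to the factor
`R⁻ⁿ`, the coefficient of `xⁿ` in `T(B)` is therefore a renewal sum for this law, weighted by the
coefficients of `T(x / e)`, which by Stirling's formula are asymptotic to a multiple of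
`k ^ (-3 / 2)`. The renewal theorem gives the limit of the unweighted sum, and by exponential bounds
for large deviations only the `k` close to `n` divided by the mean of the law contribute.
-/

/-! ### The Euler transform -/

section EulerTransform

variable {α : Type*} {S : Set α} {w : α → ℕ} {n : ℕ}

/-- The elements of `S` of weight `n`. -/
def weightSlice (S : Set α) (w : α → ℕ) (n : ℕ) : Set α := {x ∈ S | w x = n}

/-- The multisets of elements of `S` of total weight `n`. -/
def multisetSlice (S : Set α) (w : α → ℕ) (n : ℕ) : Set (Multiset α) :=
  {M | (∀ x ∈ M, x ∈ S) ∧ (M.map w).sum = n}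

theorem finite_setOf_multiset_card_le (hS : S.Finite) (n : ℕ) :
    {M : Multiset α | (∀ x ∈ M, x ∈ S) ∧ M.card ≤ n}.Finite := by
  classical
  refine (Set.finite_Iic (n • hS.toFinset.val)).subset fun M ⟨hM, hcard⟩ => ?_
  rw [Set.mem_Iic, Multiset.le_iff_count]
  intro x
  by_cases hx : x ∈ M
  · have hcount : Multiset.count x hS.toFinset.val = 1 :=
      Multiset.count_eq_one_of_mem hS.toFinset.nodup (hS.mem_toFinset.2 (hM x hx))
    rw [Multiset.count_nsmul, hcount, mul_one]
    exact (Multiset.count_le_card x M).trans hcard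
  · rw [Multiset.count_eq_zero_of_notMem hx]
    exact Nat.zero_le _

theorem le_sum_map_of_mem {M : Multiset α} {x : α} (hx : x ∈ M) : w x ≤ (M.map w).sum :=
  Multiset.le_sum_of_mem (Multiset.mem_map_of_mem _ hx)

theorem card_le_sum_map (hw : ∀ x, 0 < w x) (M : Multiset α) : M.card ≤ (M.map w).sum := by
  simpa only [smul_eq_mul, mul_one, Multiset.card_map] using
    Multiset.card_nsmul_le_sum (s := M.map w) (a := 1) (by
      simpa only [Multiset.mem_map, forall_exists_index, and_imp, forall_apply_eq_imp_iff₂]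
        using fun x _ => Nat.succ_le_of_lt (hw x))

theorem lt_sum_map_of_mem (hw : ∀ x, 0 < w x) {M : Multiset α} {x : α} (hx : x ∈ M)
    (hM : 2 ≤ M.card) : w x < (M.map w).sum := by
  obtain ⟨M', rfl⟩ := Multiset.exists_cons_of_mem hx
  have := card_le_sum_map hw M'
  simp only [Multiset.card_cons, Multiset.map_cons, Multiset.sum_cons] at *
  omega

theorem finite_multisetSlice (hw : ∀ x, 0 < w x) (hfin : ∀ n, (weightSlice S w n).Finite) (n : ℕ) :
    (multisetSlice S w n).Finite := by
  have hslices : (⋃ k ∈ Set.Iic n, weightSlice S w k).Finite :=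
    (Set.finite_Iic n).biUnion fun k _ => hfin k
  refine (finite_setOf_multiset_card_le hslices n).subset fun M ⟨hM, hsum⟩ => ⟨fun x hx => ?_, ?_⟩
  · exact Set.mem_biUnion (hsum ▸ le_sum_map_of_mem hx : w x ≤ n) ⟨hM x hx, rfl⟩
  · exact hsum ▸ card_le_sum_map hw M

theorem multisetSlice_zero (hw : ∀ x, 0 < w x) : multisetSlice S w 0 = {0} := by
  ext M
  refine ⟨fun ⟨_, hsum⟩ => ?_, ?_⟩
  · exact Multiset.card_eq_zero.1 (Nat.le_zero.1 (hsum ▸ card_le_sum_map hw M))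
  · rintro rfl
    exact ⟨fun _ h => absurd h (Multiset.notMem_zero _), rfl⟩

theorem ncard_multisetSlice (hw : ∀ x, 0 < w x) (hfin : ∀ n, (weightSlice S w n).Finite) :
    (multisetSlice S w n).ncard =
      (weightSlice S w n).ncard + {M ∈ multisetSlice S w n | M.card ≠ 1}.ncard := by
  have hsingle : {M ∈ multisetSlice S w n | M.card = 1} = (fun x => {x}) '' weightSlice S w n := by
    ext M
    constructor
    · rintro ⟨⟨hM, hsum⟩, hcard⟩
      obtain ⟨x, rfl⟩ := Multiset.card_eq_one.1 hcard
      exact ⟨x, ⟨hM x (Multiset.mem_singleton_self x), by simpa using hsum⟩, rfl⟩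
    · rintro ⟨x, ⟨hx, hwx⟩, rfl⟩
      exact ⟨⟨by simpa using hx, by simpa using hwx⟩, Multiset.card_singleton x⟩
  have hinj : Function.Injective fun x : α => ({x} : Multiset α) :=
    fun _ _ => Multiset.singleton_inj.1
  rw [← Set.ncard_image_of_injective (weightSlice S w n) hinj, ← hsingle]
  exact (Set.ncard_inter_add_ncard_sdiff_eq_ncard _ {M | M.card = 1}
    (finite_multisetSlice hw hfin n)).symm

theorem ncard_multisetSlice_card_ne_one_le (hw : ∀ x, 0 < w x)
    (hfin : ∀ n, (weightSlice S w n).Finite) (hn : n ≠ 0) :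
    {M ∈ multisetSlice S w n | M.card ≠ 1}.ncard ≤
      ∑ j ∈ Finset.Ico 1 n, (weightSlice S w j).ncard * (multisetSlice S w (n - j)).ncard := by
  let consImage (j : ℕ) : Set (Multiset α) :=
    (fun p : α × Multiset α => p.1 ::ₘ p.2) '' (weightSlice S w j ×ˢ multisetSlice S w (n - j))
  have hprod (j : ℕ) : (weightSlice S w j ×ˢ multisetSlice S w (n - j)).Finite :=
    (hfin j).prod (finite_multisetSlice hw hfin _)
  have hcover : {M ∈ multisetSlice S w n | M.card ≠ 1} ⊆ ⋃ j ∈ Finset.Ico 1 n, consImage j := by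
    rintro M ⟨⟨hM, hsum⟩, hcard⟩
    have hcard_pos : 0 < M.card := by
      rw [Multiset.card_pos]
      rintro rfl
      exact hn hsum.symm
    obtain ⟨x, hx⟩ := Multiset.card_pos_iff_exists_mem.1 hcard_pos
    have hlt : w x < n := hsum ▸ lt_sum_map_of_mem hw hx (by omega)
    obtain ⟨M', rfl⟩ := Multiset.exists_cons_of_mem hx
    rw [Multiset.map_cons, Multiset.sum_cons] at hsum
    refine Set.mem_biUnion (Finset.mem_Ico.2 ⟨hw x, hlt⟩)
      ⟨(x, M'), ⟨⟨hM x hx, rfl⟩, fun y hy => hM y (Multiset.mem_cons_of_mem hy), ?_⟩, rfl⟩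
    exact Nat.eq_sub_of_add_eq' hsum
  calc {M ∈ multisetSlice S w n | M.card ≠ 1}.ncard
      ≤ (⋃ j ∈ Finset.Ico 1 n, consImage j).ncard :=
        Set.ncard_le_ncard hcover
          ((Finset.Ico 1 n).finite_toSet.biUnion fun j _ => (hprod j).image _)
    _ ≤ ∑ j ∈ Finset.Ico 1 n, (consImage j).ncard := Finset.set_ncard_biUnion_le _ _
    _ ≤ _ := Finset.sum_le_sum fun j _ => (Set.ncard_image_le (hprod j)).trans_eq Set.ncard_prod

open scoped Classical in
theorem ncard_multisetSlice_le_count {x : α} (hx : x ∈ S) (i : ℕ) :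
    {M ∈ multisetSlice S w n | i ≤ M.count x}.ncard =
      if i * w x ≤ n then (multisetSlice S w (n - i * w x)).ncard else 0 := by
  have hadd (M : Multiset α) :
      ((M + Multiset.replicate i x).map w).sum = (M.map w).sum + i * w x := by
    rw [Multiset.map_add, Multiset.sum_add, Multiset.map_replicate, Multiset.sum_replicate,
      smul_eq_mul]
  have hexists {M : Multiset α} (hM : i ≤ M.count x) : ∃ M', M' + Multiset.replicate i x = M := by
    obtain ⟨M', rfl⟩ := Multiset.le_iff_exists_add.1 (Multiset.le_count_iff_replicate_le.1 hM)
    exact ⟨M', add_comm _ _⟩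
  split_ifs with hi
  · rw [← Set.ncard_image_of_injective (multisetSlice S w (n - i * w x))
      (add_left_injective (Multiset.replicate i x))]
    congr 1
    ext M
    constructor
    · rintro ⟨⟨hM, hsum⟩, hcount⟩
      obtain ⟨M', rfl⟩ := hexists hcount
      rw [hadd] at hsum
      exact ⟨M', ⟨fun y hy => hM y (Multiset.mem_add.2 (.inl hy)), Nat.eq_sub_of_add_eq hsum⟩, rfl⟩
    · rintro ⟨M', ⟨hM', hsum⟩, rfl⟩
      refine ⟨⟨fun y hy => ?_, ?_⟩, ?_⟩
      · obtain hy | hy := Multiset.mem_add.1 hy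
        · exact hM' y hy
        · exact Multiset.eq_of_mem_replicate hy ▸ hx
      · rw [hadd, hsum, Nat.sub_add_cancel hi]
      · exact Multiset.le_count_iff_replicate_le.2 (Multiset.le_add_left _ _)
  · suffices {M ∈ multisetSlice S w n | i ≤ M.count x} = ∅ by rw [this, Set.ncard_empty]
    refine Set.eq_empty_of_forall_notMem fun M ⟨⟨_, hsum⟩, hcount⟩ => ?_
    obtain ⟨M', rfl⟩ := hexists hcount
    rw [hadd] at hsum
    omega

theorem sum_Icc_ite_mul_le_eq {N : Type*} [AddCommMonoid N] {d : ℕ} (hd : 0 < d) (n : ℕ)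
    (f : ℕ → N) :
    ∑ i ∈ Finset.Icc 1 n, (if i * d ≤ n then f (i * d) else 0) =
      ∑ j ∈ Finset.Icc 1 n with d ∣ j, f j := by
  rw [← Finset.sum_filter]
  refine Finset.sum_nbij (· * d) (fun i hi => ?_)
    (fun i _ j _ => Nat.eq_of_mul_eq_mul_right hd) (fun j hj => ?_) (fun _ _ => rfl)
  · simp only [Finset.mem_filter, Finset.mem_Icc] at hi ⊢
    exact ⟨⟨Nat.mul_pos hi.1.1 hd, hi.2⟩, Dvd.intro_left i rfl⟩
  · simp only [Finset.coe_filter, Finset.mem_Icc, Set.mem_ofPred_eq] at hj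
    obtain ⟨⟨hpos, hle⟩, ⟨i, rfl⟩⟩ := hj
    rw [mul_comm] at hpos hle
    refine ⟨i, ?_, mul_comm _ _⟩
    simp only [Finset.coe_filter, Finset.mem_Icc, Set.mem_ofPred_eq]
    exact ⟨⟨Nat.pos_of_mul_pos_right hpos, (Nat.le_mul_of_pos_right i hd).trans hle⟩, hle⟩

open scoped Classical in
theorem sum_count_multisetSlice (hw : ∀ x, 0 < w x) (hfin : ∀ n, (weightSlice S w n).Finite)
    {x : α} (hx : x ∈ S) :
    ∑ M ∈ (finite_multisetSlice hw hfin n).toFinset, M.count x =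
      ∑ j ∈ Finset.Icc 1 n with w x ∣ j, (multisetSlice S w (n - j)).ncard := by
  have hcount : ∀ M ∈ (finite_multisetSlice hw hfin n).toFinset,
      M.count x = ∑ i ∈ Finset.Icc 1 n, if i ≤ M.count x then 1 else 0 := by
    intro M hM
    have hle : M.count x ≤ n := (Multiset.count_le_card x M).trans
      (((Set.Finite.mem_toFinset _).1 hM).2 ▸ card_le_sum_map hw M)
    have hIcc : {i ∈ Finset.Icc 1 n | i ≤ M.count x} = Finset.Icc 1 (M.count x) := by
      ext i
      simp only [Finset.mem_filter, Finset.mem_Icc]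
      omega
    rw [Finset.sum_boole, hIcc, Nat.card_Icc, Nat.add_sub_cancel, Nat.cast_id]
  rw [Finset.sum_congr rfl hcount, Finset.sum_comm, ← sum_Icc_ite_mul_le_eq (hw x)]
  refine Finset.sum_congr rfl fun i _ => ?_
  rw [← ncard_multisetSlice_le_count hx, Finset.sum_boole, Nat.cast_id, ← Set.ncard_coe_finset]
  congr 1
  ext M
  simp only [Finset.coe_filter, Set.Finite.mem_toFinset, Set.mem_ofPred_eq]

theorem sum_weight_dvd_eq_sum_divisors {C : Finset α} {n j : ℕ}
    (hC : ∀ x, x ∈ C ↔ x ∈ S ∧ w x ≤ n) (hj : j ∈ Finset.Icc 1 n) :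
    ∑ x ∈ C with w x ∣ j, w x = ∑ d ∈ j.divisors, d * (weightSlice S w d).ncard := by
  obtain ⟨hj_pos, hjn⟩ := Finset.mem_Icc.1 hj
  have hmaps : ∀ x ∈ C.filter (w · ∣ j), w x ∈ j.divisors := fun x hx =>
    Nat.mem_divisors.2 ⟨(Finset.mem_filter.1 hx).2, Nat.ne_of_gt hj_pos⟩
  rw [← Finset.sum_fiberwise_of_maps_to hmaps]
  refine Finset.sum_congr rfl fun d hd => ?_
  have hdvd := Nat.dvd_of_mem_divisors hd
  have hslice : (((C.filter (w · ∣ j)).filter (w · = d) : Finset α) : Set α) =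
      weightSlice S w d := by
    ext x
    simp only [Finset.coe_filter, Finset.mem_filter, hC, Set.mem_ofPred_eq, weightSlice]
    constructor
    · exact fun h => ⟨h.1.1.1, h.2⟩
    · rintro ⟨hx, rfl⟩
      exact ⟨⟨⟨hx, (Nat.le_of_dvd hj_pos hdvd).trans hjn⟩, hdvd⟩, rfl⟩
  rw [Finset.sum_congr rfl fun x hx => (Finset.mem_filter.1 hx).2, Finset.sum_const, smul_eq_mul,
    mul_comm, ← hslice, Set.ncard_coe_finset]

-- Double counting of the total weight of all multisets of weight `n`, element by element.
theorem mul_ncard_multisetSlice (hw : ∀ x, 0 < w x) (hfin : ∀ n, (weightSlice S w n).Finite)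
    (n : ℕ) :
    n * (multisetSlice S w n).ncard =
      ∑ j ∈ Finset.Icc 1 n, (∑ d ∈ j.divisors, d * (weightSlice S w d).ncard) *
        (multisetSlice S w (n - j)).ncard := by
  classical
  have hC_fin : {x | x ∈ S ∧ w x ≤ n}.Finite :=
    ((Set.finite_Iic n).biUnion fun k _ => hfin k).subset
      fun x hx => Set.mem_biUnion (Set.mem_Iic.2 hx.2) ⟨hx.1, rfl⟩
  set C := hC_fin.toFinset
  have hC (x : α) : x ∈ C ↔ x ∈ S ∧ w x ≤ n := hC_fin.mem_toFinset
  have hsum : ∀ M ∈ (finite_multisetSlice hw hfin n).toFinset,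
      n = ∑ x ∈ C, M.count x * w x := by
    intro M hM
    obtain ⟨hMS, hMn⟩ := (Set.Finite.mem_toFinset _).1 hM
    have hsub : M.toFinset ⊆ C := fun x hx =>
      have hx := Multiset.mem_toFinset.1 hx
      (hC x).2 ⟨hMS x hx, hMn ▸ le_sum_map_of_mem hx⟩
    rw [← Finset.sum_subset hsub fun x _ hx => by
      rw [Multiset.count_eq_zero_of_notMem (mt Multiset.mem_toFinset.2 hx), zero_mul]]
    exact hMn.symm.trans (Finset.sum_multiset_map_count M w)
  calc n * (multisetSlice S w n).ncard
      = ∑ _ ∈ (finite_multisetSlice hw hfin n).toFinset, n := by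
        rw [Finset.sum_const, smul_eq_mul, mul_comm,
          Set.ncard_eq_toFinset_card _ (finite_multisetSlice hw hfin n)]
    _ = ∑ x ∈ C, ∑ M ∈ (finite_multisetSlice hw hfin n).toFinset, M.count x * w x := by
        rw [Finset.sum_comm]
        exact Finset.sum_congr rfl hsum
    _ = ∑ x ∈ C, ∑ j ∈ Finset.Icc 1 n,
          if w x ∣ j then w x * (multisetSlice S w (n - j)).ncard else 0 :=
        Finset.sum_congr rfl fun x hx => by
          rw [← Finset.sum_mul, sum_count_multisetSlice hw hfin ((hC x).1 hx).1, mul_comm,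
            Finset.mul_sum, Finset.sum_filter]
    _ = _ := by
        rw [Finset.sum_comm]
        refine Finset.sum_congr rfl fun j hj => ?_
        rw [← sum_weight_dvd_eq_sum_divisors hC hj, Finset.sum_mul, Finset.sum_filter]

end EulerTransform

/-! ### Isomorphism classes of trees -/

section MultisetRel

variable {α β γ : Type*} {r : α → β → Prop}

theorem multiset_rel_coe {l₁ : List α} {l₂ : List β} :
    Multiset.Rel r l₁ l₂ ↔ ∃ l, List.Forall₂ r l₁ l ∧ l.Perm l₂ := by
  constructor
  · have exists_lists {s : Multiset α} {t : Multiset β} (h : Multiset.Rel r s t) :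
        ∃ (k₁ : List α) (k₂ : List β), s = k₁ ∧ t = k₂ ∧ List.Forall₂ r k₁ k₂ := by
      induction h with
      | zero => exact ⟨[], [], rfl, rfl, .nil⟩
      | cons hab _ ih =>
        obtain ⟨k₁, k₂, rfl, rfl, h⟩ := ih
        exact ⟨_ :: k₁, _ :: k₂, rfl, rfl, .cons hab h⟩
    intro h
    obtain ⟨k₁, k₂, h₁, h₂, hk⟩ := exists_lists h
    obtain ⟨l, hl, hperm⟩ := List.perm_comp_forall₂ (Multiset.coe_eq_coe.1 h₁) hk
    exact ⟨l, hl, hperm.trans (Multiset.coe_eq_coe.1 h₂).symm⟩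
  · rintro ⟨l, hl, hperm⟩
    rw [← Multiset.coe_eq_coe.2 hperm]
    clear hperm
    induction hl with
    | nil => exact .zero
    | cons hab _ ih => exact .cons hab ih

theorem multiset_rel_comp {r' : β → γ → Prop} {s : Multiset α} {t : Multiset β} {u : Multiset γ}
    (h : Multiset.Rel r s t) (h' : Multiset.Rel r' t u) :
    Multiset.Rel (Relation.Comp r r') s u := by
  induction h generalizing u with
  | zero => rw [Multiset.rel_zero_left.1 h']; exact .zero
  | cons hab _ ih =>
    obtain ⟨c, u', hbc, hu, rfl⟩ := Multiset.rel_cons_left.1 h'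
    exact .cons ⟨_, hab, hbc⟩ (ih hu)

end MultisetRel

namespace RTree

theorem node_induction {motive : RTree → Prop}
    (node : ∀ l, (∀ t ∈ l, motive t) → motive (.node l)) : ∀ t, motive t
  | .node l => node l fun t _ => node_induction node t
decreasing_by
  have := List.sizeOf_lt_of_mem ‹t ∈ l›
  simp only [RTree.node.sizeOf_spec]
  omega

theorem leaves_node (l : List RTree) :
    (RTree.node l).leaves = if l = [] then 1 else (l.map RTree.leaves).sum := by
  cases l with
  | nil => rw [leaves, if_pos rfl]
  | cons a l =>
    rw [leaves, if_neg (List.cons_ne_nil _ _), List.map_attach_eq_pmap, List.pmap_eq_map]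

theorem iso_node_iff_rel {l₁ l₂ : List RTree} :
    Iso (.node l₁) (.node l₂) ↔ Multiset.Rel Iso l₁ l₂ := by
  rw [multiset_rel_coe]
  exact ⟨fun (.node h₁ h₂) => ⟨_, h₁, h₂⟩, fun ⟨_, h₁, h₂⟩ => .node h₁ h₂⟩

theorem Iso.refl (t : RTree) : Iso t t := by
  induction t using node_induction with
  | node l ih => exact iso_node_iff_rel.2 (Multiset.rel_refl_of_refl_on ih)

theorem Iso.symm {t s : RTree} (h : Iso t s) : Iso s t := by
  induction t using node_induction generalizing s with
  | node l ih =>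
    obtain ⟨l'⟩ := s
    rw [iso_node_iff_rel] at h ⊢
    exact Multiset.rel_flip.1 (h.mono fun a ha b _ hab => ih a ha hab)

theorem Iso.trans {t s u : RTree} (h : Iso t s) (h' : Iso s u) : Iso t u := by
  induction t using node_induction generalizing s u with
  | node l ih =>
    obtain ⟨l'⟩ := s
    obtain ⟨l''⟩ := u
    rw [iso_node_iff_rel] at h h' ⊢
    exact (multiset_rel_comp h h').mono fun a ha c _ ⟨b, hab, hbc⟩ => ih a ha hab hbc

instance isoSetoid : Setoid RTree := ⟨Iso, Iso.refl, Iso.symm, Iso.trans⟩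

/-- Hierarchies none of whose subhierarchies has its size in `E`. -/
def IsHierarchyAvoiding (E : Set ℕ) (t : RTree) : Prop :=
  t.IsHierarchy ∧ ∀ s : RTree, s.SubtreeOf t → s.leaves ∉ E

theorem isHierarchyAvoiding_node_iff {E : Set ℕ} {l : List RTree} :
    IsHierarchyAvoiding E (.node l) ↔
      l.length ≠ 1 ∧ (RTree.node l).leaves ∉ E ∧ ∀ c ∈ l, IsHierarchyAvoiding E c := by
  constructor
  · rintro ⟨⟨hlen, hl⟩, havoid⟩
    exact ⟨hlen, havoid _ (.refl _), fun c hc => ⟨hl c hc, fun s hs => havoid s (.child hc hs)⟩⟩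
  · rintro ⟨hlen, hroot, hl⟩
    refine ⟨.node hlen fun t ht => (hl t ht).1, fun s hs => ?_⟩
    cases hs with
    | refl => exact hroot
    | child hc hs => exact (hl _ hc).2 _ hs

theorem Iso.leaves_eq {t s : RTree} (h : Iso t s) : t.leaves = s.leaves := by
  induction t using node_induction generalizing s with
  | node l ih =>
    obtain ⟨l'⟩ := s
    have hrel := iso_node_iff_rel.1 h
    have hsizes : (l : Multiset RTree).map leaves = (l' : Multiset RTree).map leaves :=
      Multiset.rel_eq.1 (Multiset.rel_map.2 (hrel.mono fun a ha b _ hab => ih a ha hab))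
    have hnil : l = [] ↔ l' = [] := by
      simpa only [← Multiset.coe_eq_zero, ← Multiset.card_eq_zero]
        using Eq.congr_left (Multiset.card_eq_card_of_rel hrel)
    have hsum := congrArg Multiset.sum hsizes
    simp only [Multiset.map_coe, Multiset.sum_coe] at hsum
    simp only [leaves_node, hnil, hsum]

theorem Iso.isHierarchyAvoiding {E : Set ℕ} {t s : RTree} (h : Iso t s)
    (ht : IsHierarchyAvoiding E t) : IsHierarchyAvoiding E s := by
  induction t using node_induction generalizing s with
  | node l ih =>
    obtain ⟨l'⟩ := s
    have hrel := iso_node_iff_rel.1 h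
    rw [isHierarchyAvoiding_node_iff] at ht ⊢
    refine ⟨?_, h.leaves_eq ▸ ht.2.1, fun c hc => ?_⟩
    · exact (Multiset.card_eq_card_of_rel hrel).symm.trans_ne ht.1
    · obtain ⟨a, ha, hca⟩ := Multiset.exists_mem_of_rel_of_mem (Multiset.rel_flip.2 hrel) hc
      exact ih a ha hca (ht.2.2 a ha)

end RTree

/-- Finite rooted unordered trees, that is, isomorphism classes of `RTree`s. -/
def UTree : Type := Quotient RTree.isoSetoid

namespace UTree

/-- The unordered tree underlying a presented tree. -/
def mk (t : RTree) : UTree := Quotient.mk _ t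

theorem mk_eq_mk {t s : RTree} : mk t = mk s ↔ RTree.Iso t s := Quotient.eq

theorem mk_surjective : Function.Surjective mk := Quotient.mk_surjective

theorem iso_node_iff_map_mk_eq {l₁ l₂ : List RTree} :
    RTree.Iso (.node l₁) (.node l₂) ↔
      (l₁ : Multiset RTree).map mk = (l₂ : Multiset RTree).map mk := by
  rw [RTree.iso_node_iff_rel, ← Multiset.rel_eq, Multiset.rel_map]
  simp only [mk_eq_mk]

/-- The multiset of the maximal proper subtrees. -/
def children : UTree → Multiset UTree :=
  Quotient.lift (fun | .node l => (l : Multiset RTree).map mk) fun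
    | .node _, .node _ => iso_node_iff_map_mk_eq.1

theorem children_mk_node (l : List RTree) :
    (mk (.node l)).children = (l : Multiset RTree).map mk := rfl

theorem children_bijective : Function.Bijective children := by
  constructor
  · intro a b h
    obtain ⟨⟨l₁⟩, rfl⟩ := mk_surjective a
    obtain ⟨⟨l₂⟩, rfl⟩ := mk_surjective b
    exact mk_eq_mk.2 (iso_node_iff_map_mk_eq.2 h)
  · intro F
    obtain ⟨G, rfl⟩ := Multiset.map_surjective_of_surjective mk_surjective F
    induction G using Quotient.inductionOn with
    | h l => exact ⟨mk (.node l), rfl⟩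

theorem induction_children {motive : UTree → Prop}
    (ind : ∀ t : UTree, (∀ c ∈ t.children, motive c) → motive t) (t : UTree) : motive t := by
  obtain ⟨t, rfl⟩ := mk_surjective t
  induction t using RTree.node_induction with
  | node l ih =>
    refine ind _ fun c hc => ?_
    rw [children_mk_node] at hc
    obtain ⟨a, ha, rfl⟩ := Multiset.mem_map.1 hc
    exact ih a ha

/-- The number of leaves. -/
def size : UTree → ℕ := Quotient.lift RTree.leaves fun _ _ => RTree.Iso.leaves_eq

theorem size_mk (t : RTree) : (mk t).size = t.leaves := rfl

open scoped Classical in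
theorem size_eq (t : UTree) :
    t.size = if t.children = 0 then 1 else (t.children.map size).sum := by
  obtain ⟨⟨l⟩, rfl⟩ := mk_surjective t
  simp only [size_mk, RTree.leaves_node, children_mk_node, Multiset.map_map, Function.comp_def,
    Multiset.map_eq_zero, Multiset.coe_eq_zero]
  rfl

theorem size_pos (t : UTree) : 0 < t.size := by
  induction t using induction_children with
  | ind t ih =>
    rw [size_eq]
    split_ifs with h
    · exact one_pos
    · obtain ⟨c, hc⟩ := Multiset.exists_mem_of_ne_zero h
      exact (ih c hc).trans_le (Multiset.le_sum_of_mem (Multiset.mem_map_of_mem _ hc))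

/-- Unordered hierarchies none of whose subhierarchies has its size in `E`. -/
def IsHierarchyAvoiding (E : Set ℕ) : UTree → Prop :=
  Quotient.lift (RTree.IsHierarchyAvoiding E) fun _ _ h =>
    propext ⟨h.isHierarchyAvoiding, h.symm.isHierarchyAvoiding⟩

theorem isHierarchyAvoiding_mk {E : Set ℕ} {t : RTree} :
    (mk t).IsHierarchyAvoiding E ↔ t.IsHierarchyAvoiding E := Iff.rfl

theorem isHierarchyAvoiding_iff {E : Set ℕ} {t : UTree} :
    t.IsHierarchyAvoiding E ↔
      t.children.card ≠ 1 ∧ t.size ∉ E ∧ ∀ c ∈ t.children, c.IsHierarchyAvoiding E := by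
  obtain ⟨⟨l⟩, rfl⟩ := mk_surjective t
  simp only [isHierarchyAvoiding_mk, RTree.isHierarchyAvoiding_node_iff, children_mk_node, size_mk,
    Multiset.card_map, Multiset.coe_card, Multiset.mem_map, Multiset.mem_coe,
    forall_exists_index, and_imp, forall_apply_eq_imp_iff₂]

end UTree

/-- The unordered hierarchies of size `n` none of whose subhierarchies has its size in `E`. -/
def hierarchiesOfSize (E : Set ℕ) (n : ℕ) : Set UTree :=
  weightSlice {t | t.IsHierarchyAvoiding E} UTree.size n

/-- The multisets, of total size `n`, of unordered hierarchies avoiding the sizes in `E`. -/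
def forestsOfSize (E : Set ℕ) (n : ℕ) : Set (Multiset UTree) :=
  multisetSlice {t | t.IsHierarchyAvoiding E} UTree.size n

theorem card_quot_iso_eq_ncard {E : Set ℕ} {n : ℕ} {p : RTree → Prop}
    (hp : ∀ t, p t ↔ t.IsHierarchyAvoiding E ∧ t.leaves = n) :
    Nat.card (Quot fun a b : {t : RTree // p t} => RTree.Iso a.1 b.1) =
      (hierarchiesOfSize E n).ncard := by
  rw [← Nat.card_coe_set_eq]
  refine Nat.card_eq_of_bijective
    (Quot.lift (fun a => (⟨UTree.mk a.1, (hp a.1).1 a.2⟩ : hierarchiesOfSize E n))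
      fun a b hab => Subtype.ext (UTree.mk_eq_mk.2 hab)) ⟨?_, ?_⟩
  · rintro ⟨a⟩ ⟨b⟩ h
    exact Quot.sound (UTree.mk_eq_mk.1 (congrArg Subtype.val h))
  · rintro ⟨t, ht⟩
    obtain ⟨a, rfl⟩ := UTree.mk_surjective t
    exact ⟨Quot.mk _ ⟨a, (hp a).2 ht⟩, rfl⟩

theorem hierarchyCount_eq_ncard (n : ℕ) :
    hierarchyCount n = (hierarchiesOfSize ∅ n).ncard :=
  card_quot_iso_eq_ncard fun t => by
    simp only [RTree.IsHierarchyAvoiding, Set.mem_empty_iff_false, not_false_eq_true, implies_true,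
      and_true]

theorem hierarchyCountNoSize2_eq_ncard (n : ℕ) :
    hierarchyCountNoSize2 n = (hierarchiesOfSize {2} n).ncard :=
  card_quot_iso_eq_ncard fun t => by
    simp only [RTree.IsHierarchyAvoiding, Set.mem_singleton_iff, and_comm (a := t.leaves = n),
      and_assoc, ne_eq]

section HierarchyCounts

variable {E : Set ℕ} {n : ℕ} {t : UTree}

theorem UTree.size_of_children_ne_zero (ht : t.children ≠ 0) :
    t.size = (t.children.map size).sum := by
  classical rw [size_eq, if_neg ht]

theorem UTree.card_children_le_size (t : UTree) : t.children.card ≤ t.size := by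
  classical
  rw [size_eq]
  split_ifs with h
  · rw [h, Multiset.card_zero]
    exact zero_le_one
  · exact card_le_sum_map size_pos _

theorem UTree.size_lt_of_mem_children (ht : t.children.card ≠ 1) {c : UTree}
    (hc : c ∈ t.children) : c.size < t.size := by
  have hpos : 0 < t.children.card := Multiset.card_pos_iff_exists_mem.2 ⟨c, hc⟩
  rw [t.size_of_children_ne_zero (Multiset.card_pos.1 hpos)]
  exact lt_sum_map_of_mem size_pos hc (by omega)

theorem finite_hierarchiesOfSize (E : Set ℕ) (n : ℕ) : (hierarchiesOfSize E n).Finite := by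
  induction n using Nat.strong_induction_on with
  | h n ih =>
    have hsmaller : (⋃ k ∈ Set.Iio n, hierarchiesOfSize E k).Finite :=
      (Set.finite_Iio n).biUnion ih
    refine Set.Finite.of_finite_image ((finite_setOf_multiset_card_le hsmaller n).subset ?_)
      UTree.children_bijective.1.injOn
    rintro _ ⟨t, ⟨ht, rfl⟩, rfl⟩
    obtain ⟨hcard, -, hchildren⟩ := UTree.isHierarchyAvoiding_iff.1 ht
    exact ⟨fun c hc => Set.mem_biUnion (t.size_lt_of_mem_children hcard hc) ⟨hchildren c hc, rfl⟩,
      t.card_children_le_size⟩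

theorem hierarchiesOfSize_eq_empty (hn : n = 0 ∨ n ∈ E) : hierarchiesOfSize E n = ∅ := by
  refine Set.eq_empty_of_forall_notMem ?_
  rintro t ⟨ht, rfl⟩
  obtain hzero | hmem := hn
  · exact t.size_pos.ne' hzero
  · exact (UTree.isHierarchyAvoiding_iff.1 ht).2.1 hmem

theorem image_children_hierarchiesOfSize_one (hE : 1 ∉ E) :
    UTree.children '' hierarchiesOfSize E 1 = {0} := by
  classical
  ext M
  obtain ⟨t, rfl⟩ := UTree.children_bijective.2 M
  rw [UTree.children_bijective.1.mem_set_image, Set.mem_singleton_iff]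
  constructor
  · rintro ⟨ht, hsize⟩
    have hcard := hsize ▸ t.card_children_le_size
    exact Multiset.card_eq_zero.1
      (Nat.lt_one_iff.1 (hcard.lt_of_ne (UTree.isHierarchyAvoiding_iff.1 ht).1))
  · intro ht
    have hsize : t.size = 1 := by rw [UTree.size_eq, if_pos ht]
    refine ⟨UTree.isHierarchyAvoiding_iff.2 ⟨?_, hsize ▸ hE, fun c hc => ?_⟩, hsize⟩
    · rw [ht, Multiset.card_zero]
      exact zero_ne_one
    · exact absurd (ht ▸ hc) (Multiset.notMem_zero c)

theorem image_children_hierarchiesOfSize (hn : 2 ≤ n) (hE : n ∉ E) :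
    UTree.children '' hierarchiesOfSize E n = {M ∈ forestsOfSize E n | M.card ≠ 1} := by
  classical
  ext M
  obtain ⟨t, rfl⟩ := UTree.children_bijective.2 M
  rw [UTree.children_bijective.1.mem_set_image]
  constructor
  · rintro ⟨ht, rfl⟩
    obtain ⟨hcard, -, hchildren⟩ := UTree.isHierarchyAvoiding_iff.1 ht
    have hne : t.children ≠ 0 := fun h => by
      rw [UTree.size_eq, if_pos h] at hn
      omega
    exact ⟨⟨hchildren, (t.size_of_children_ne_zero hne).symm⟩, hcard⟩
  · rintro ⟨⟨hchildren, hsum⟩, hcard⟩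
    have hne : t.children ≠ 0 := fun h => by
      rw [h, Multiset.map_zero, Multiset.sum_zero] at hsum
      omega
    have hsize : t.size = n := (t.size_of_children_ne_zero hne).trans hsum
    exact ⟨UTree.isHierarchyAvoiding_iff.2 ⟨hcard, hsize ▸ hE, hchildren⟩, hsize⟩

theorem ncard_hierarchiesOfSize_one (hE : 1 ∉ E) : (hierarchiesOfSize E 1).ncard = 1 := by
  rw [← Set.ncard_image_of_injective _ UTree.children_bijective.1,
    image_children_hierarchiesOfSize_one hE, Set.ncard_singleton]

theorem ncard_forestsOfSize_zero (E : Set ℕ) : (forestsOfSize E 0).ncard = 1 := by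
  rw [forestsOfSize, multisetSlice_zero UTree.size_pos, Set.ncard_singleton]

theorem mul_ncard_forestsOfSize (E : Set ℕ) (n : ℕ) :
    n * (forestsOfSize E n).ncard =
      ∑ j ∈ Finset.Icc 1 n, (∑ d ∈ j.divisors, d * (hierarchiesOfSize E d).ncard) *
        (forestsOfSize E (n - j)).ncard :=
  mul_ncard_multisetSlice UTree.size_pos (finite_hierarchiesOfSize E) n

theorem ncard_forestsOfSize_one (hE : 1 ∉ E) : (forestsOfSize E 1).ncard = 1 := by
  simpa [ncard_forestsOfSize_zero, ncard_hierarchiesOfSize_one hE]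
    using mul_ncard_forestsOfSize E 1

theorem ncard_forestsOfSize (E : Set ℕ) (n : ℕ) :
    (forestsOfSize E n).ncard =
      (hierarchiesOfSize E n).ncard + {M ∈ forestsOfSize E n | M.card ≠ 1}.ncard :=
  ncard_multisetSlice UTree.size_pos (finite_hierarchiesOfSize E)

theorem ncard_hierarchiesOfSize_le (E : Set ℕ) (n : ℕ) :
    (hierarchiesOfSize E n).ncard ≤ (forestsOfSize E n).ncard :=
  (Nat.le_add_right _ _).trans_eq (ncard_forestsOfSize E n).symm

theorem ncard_forestsOfSize_eq_two_mul (hn : 2 ≤ n) (hE : n ∉ E) :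
    (forestsOfSize E n).ncard = 2 * (hierarchiesOfSize E n).ncard := by
  rw [ncard_forestsOfSize, ← image_children_hierarchiesOfSize hn hE,
    Set.ncard_image_of_injective _ UTree.children_bijective.1, two_mul]

theorem ncard_forestsOfSize_card_ne_one_le (E : Set ℕ) (hn : n ≠ 0) :
    {M ∈ forestsOfSize E n | M.card ≠ 1}.ncard ≤
      ∑ j ∈ Finset.Ico 1 n, (forestsOfSize E j).ncard * (forestsOfSize E (n - j)).ncard :=
  (ncard_multisetSlice_card_ne_one_le UTree.size_pos (finite_hierarchiesOfSize E) hn).trans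
    (Finset.sum_le_sum fun j _ => Nat.mul_le_mul_right _ (ncard_hierarchiesOfSize_le E j))

theorem ncard_forestsOfSize_le (E : Set ℕ) (hn : 2 ≤ n) :
    (forestsOfSize E n).ncard ≤
      2 * ∑ j ∈ Finset.Ico 1 n, (forestsOfSize E j).ncard * (forestsOfSize E (n - j)).ncard := by
  refine le_trans ?_ (Nat.mul_le_mul_left 2 (ncard_forestsOfSize_card_ne_one_le E (by omega)))
  have hsplit := ncard_forestsOfSize E n
  by_cases hE : n ∈ E
  · rw [hierarchiesOfSize_eq_empty (.inr hE), Set.ncard_empty] at hsplit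
    omega
  · have := ncard_forestsOfSize_eq_two_mul hn hE
    omega

theorem succ_le_two_pow_mul_catalan {u : ℕ → ℕ} (h₁ : u 1 ≤ 1)
    (hu : ∀ n, 2 ≤ n → u n ≤ 2 * ∑ j ∈ Finset.Ico 1 n, u j * u (n - j)) (n : ℕ) :
    u (n + 1) ≤ 2 ^ n * catalan n := by
  induction n using Nat.strong_induction_on with
  | h n ih =>
    obtain _ | n := n
    · simpa only [pow_zero, catalan_zero, one_mul] using h₁
    calc u (n + 2) ≤ 2 * ∑ j ∈ Finset.Ico 1 (n + 2), u j * u (n + 2 - j) := hu _ (by omega)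
      _ = 2 * ∑ i ∈ Finset.range (n + 1), u (i + 1) * u (n - i + 1) := by
          rw [Finset.sum_Ico_eq_sum_range]
          congr 1
          refine Finset.sum_congr rfl fun i hi => ?_
          rw [Finset.mem_range] at hi
          congr 2 <;> omega
      _ ≤ 2 * ∑ i ∈ Finset.range (n + 1), 2 ^ n * (catalan i * catalan (n - i)) := by
          refine Nat.mul_le_mul_left 2 (Finset.sum_le_sum fun i hi => ?_)
          rw [Finset.mem_range] at hi
          calc u (i + 1) * u (n - i + 1)
              ≤ (2 ^ i * catalan i) * (2 ^ (n - i) * catalan (n - i)) :=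
                Nat.mul_le_mul (ih i hi) (ih (n - i) (by omega))
            _ = 2 ^ n * (catalan i * catalan (n - i)) := by
                rw [mul_mul_mul_comm, ← pow_add, Nat.add_sub_cancel' (by omega)]
      _ = 2 ^ (n + 1) * catalan (n + 1) := by
          rw [catalan_succ, Fin.sum_univ_eq_sum_range fun i => catalan i * catalan (n - i),
            ← Finset.mul_sum, pow_succ', mul_assoc]

theorem catalan_le_four_pow (n : ℕ) : catalan n ≤ 4 ^ n := by
  rw [catalan_eq_centralBinom_div]
  calc n.centralBinom / (n + 1) ≤ n.centralBinom := Nat.div_le_self _ _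
    _ ≤ 2 ^ (2 * n) := Nat.choose_le_two_pow _ _
    _ = (2 ^ 2) ^ n := pow_mul 2 2 n

theorem ncard_forestsOfSize_le_eight_pow (hE : 1 ∉ E) (n : ℕ) :
    (forestsOfSize E n).ncard ≤ 8 ^ n := by
  obtain _ | n := n
  · exact (ncard_forestsOfSize_zero E).le
  calc (forestsOfSize E (n + 1)).ncard
      ≤ 2 ^ n * catalan n := succ_le_two_pow_mul_catalan (ncard_forestsOfSize_one hE).le
        (fun _ => ncard_forestsOfSize_le E) n
    _ ≤ 2 ^ n * 4 ^ n := Nat.mul_le_mul_left _ (catalan_le_four_pow n)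
    _ ≤ 8 ^ (n + 1) := by
        rw [← mul_pow]
        exact Nat.pow_le_pow_right (by norm_num) n.le_succ

theorem ncard_forestsOfSize_two_le (hE : 1 ∉ E) :
    (forestsOfSize E 2).ncard ≤ 2 * (hierarchiesOfSize E 2).ncard + 1 := by
  have hle := ncard_forestsOfSize_card_ne_one_le E two_ne_zero
  simp only [Nat.Ico_succ_singleton, Finset.sum_singleton, Nat.add_one_sub_one,
    ncard_forestsOfSize_one hE] at hle
  have := ncard_forestsOfSize E 2
  omega

theorem two_mul_ncard_hierarchiesOfSize_two_le (E : Set ℕ) :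
    2 * (hierarchiesOfSize E 2).ncard ≤ (forestsOfSize E 2).ncard := by
  by_cases hE : 2 ∈ E
  · rw [hierarchiesOfSize_eq_empty (.inr hE), Set.ncard_empty]
    exact Nat.zero_le _
  · exact (ncard_forestsOfSize_eq_two_mul le_rfl hE).ge

end HierarchyCounts

/-- The relations between the numbers `a n` of hierarchies of size `n` of some class and the
numbers `m n` of multisets of them of total size `n` that determine the asymptotics of `a`. The
inequalities for `m 2` leave open whether the hierarchy of size `2` belongs to the class. -/
structure IsHierarchyCount (a m : ℕ → ℝ) : Prop where
  nonneg (n : ℕ) : 0 ≤ a n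
  apply_zero : a 0 = 0
  apply_one : a 1 = 1
  forest_zero : m 0 = 1
  mul_forest (n : ℕ) :
    n * m n = ∑ j ∈ Finset.Icc 1 n, (∑ d ∈ j.divisors, d * a d) * m (n - j)
  two_mul_le_forest_two : 2 * a 2 ≤ m 2
  forest_two_le : m 2 ≤ 2 * a 2 + 1
  forest_eq (n : ℕ) (hn : 3 ≤ n) : m n = 2 * a n
  forest_le (n : ℕ) : m n ≤ 8 ^ n

theorem isHierarchyCount_ncard {E : Set ℕ} (hE : E ⊆ {2}) :
    IsHierarchyCount (fun n => (hierarchiesOfSize E n).ncard)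
      (fun n => (forestsOfSize E n).ncard) := by
  have h₁ : 1 ∉ E := fun h => absurd (hE h) (by decide)
  refine ⟨fun n => Nat.cast_nonneg _, ?_, ?_, ?_, fun n => ?_, ?_, ?_, fun n hn => ?_, fun n => ?_⟩
  · rw [hierarchiesOfSize_eq_empty (.inl rfl), Set.ncard_empty, Nat.cast_zero]
  · rw [ncard_hierarchiesOfSize_one h₁, Nat.cast_one]
  · rw [ncard_forestsOfSize_zero, Nat.cast_one]
  · exact_mod_cast mul_ncard_forestsOfSize E n
  · exact_mod_cast two_mul_ncard_hierarchiesOfSize_two_le E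
  · exact_mod_cast ncard_forestsOfSize_two_le h₁
  · have hnE : n ∉ E := fun h => by
      have := Set.mem_singleton_iff.1 (hE h)
      omega
    exact_mod_cast ncard_forestsOfSize_eq_two_mul (by omega) hnE
  · exact_mod_cast ncard_forestsOfSize_le_eight_pow h₁ n

/-! ### Sums of power series -/

section SeriesSum

open PowerSeries Filter Topology

variable {𝕜 : Type*} [RCLike 𝕜] {P Q : 𝕜⟦X⟧} {x y s t : 𝕜} {r : ℝ}

/-- The power series `P` converges at `x`, with sum `s`. -/
def HasSumAt (P : 𝕜⟦X⟧) (x s : 𝕜) : Prop := HasSum (fun n => coeff n P * x ^ n) s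

/-- The power series `P` converges at `x`. -/
def SummableAt (P : 𝕜⟦X⟧) (x : 𝕜) : Prop := Summable fun n => coeff n P * x ^ n

/-- The sum of the power series `P` at `x`, which is `0` if `P` does not converge there. -/
noncomputable def seriesSum (P : 𝕜⟦X⟧) (x : 𝕜) : 𝕜 := ∑' n, coeff n P * x ^ n

theorem SummableAt.hasSumAt (h : SummableAt P x) : HasSumAt P x (seriesSum P x) := h.hasSum

theorem HasSumAt.summableAt (h : HasSumAt P x s) : SummableAt P x := h.summable

theorem HasSumAt.seriesSum_eq (h : HasSumAt P x s) : seriesSum P x = s := h.tsum_eq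

theorem HasSumAt.add (hP : HasSumAt P x s) (hQ : HasSumAt Q x t) : HasSumAt (P + Q) x (s + t) := by
  simpa only [HasSumAt, map_add, add_mul] using HasSum.add hP hQ

theorem HasSumAt.sub (hP : HasSumAt P x s) (hQ : HasSumAt Q x t) : HasSumAt (P - Q) x (s - t) := by
  simpa only [HasSumAt, map_sub, sub_mul] using HasSum.sub hP hQ

theorem hasSumAt_monomial (n : ℕ) (a x : 𝕜) : HasSumAt (monomial n a) x (a * x ^ n) := by
  have hsingle := hasSum_single (f := fun k => coeff k (monomial n a) * x ^ k) n
    fun k hk => by rw [coeff_monomial, if_neg hk, zero_mul]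
  rwa [coeff_monomial_same] at hsingle

theorem hasSumAt_C (a x : 𝕜) : HasSumAt (C a) x a := by
  simpa only [monomial_zero_eq_C_apply, pow_zero, mul_one] using hasSumAt_monomial 0 a x

theorem HasSumAt.mul (hP : HasSumAt P x s) (hQ : HasSumAt Q x t) : HasSumAt (P * Q) x (s * t) := by
  have hterm (n : ℕ) : ∑ p ∈ Finset.HasAntidiagonal.antidiagonal n, (coeff p.1 P * x ^ p.1) *
      (coeff p.2 Q * x ^ p.2) = coeff n (P * Q) * x ^ n := by
    rw [coeff_mul, Finset.sum_mul]
    refine Finset.sum_congr rfl fun p hp => ?_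
    rw [← Finset.HasAntidiagonal.mem_antidiagonal.1 hp, pow_add, mul_mul_mul_comm]
  have hprod := tsum_mul_tsum_eq_tsum_sum_antidiagonal_of_summable_norm
    hP.summable.norm hQ.summable.norm
  have hsummable := (summable_norm_sum_mul_antidiagonal_of_summable_norm
    hP.summable.norm hQ.summable.norm).of_norm
  rw [hP.tsum_eq, hQ.tsum_eq] at hprod
  rw [hprod]
  simpa only [HasSumAt, hterm] using hsummable.hasSum

theorem HasSumAt.pow (hP : HasSumAt P x s) (k : ℕ) : HasSumAt (P ^ k) x (s ^ k) := by
  induction k with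
  | zero =>
    simpa only [pow_zero, map_one] using hasSumAt_C 1 x
  | succ k ih => simpa only [pow_succ] using ih.mul hP

theorem SummableAt.of_norm_le (h : SummableAt P x) (hy : ‖y‖ ≤ ‖x‖) : SummableAt P y := by
  refine Summable.of_norm_bounded h.norm fun n => ?_
  rw [norm_mul, norm_mul, norm_pow, norm_pow]
  gcongr

theorem HasSumAt.rescale {a : 𝕜} (h : HasSumAt P (a * x) s) : HasSumAt (rescale a P) x s := by
  simpa only [HasSumAt, coeff_rescale, mul_pow, mul_comm (a ^ _), mul_assoc, mul_left_comm (a ^ _)]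
    using h

theorem hasFPowerSeriesOnBall_seriesSum (hr : 0 < r)
    (h : ∀ x : ℝ, 0 < x → x < r → SummableAt P (x : 𝕜)) :
    HasFPowerSeriesOnBall (seriesSum P)
      (FormalMultilinearSeries.ofScalars 𝕜 fun n => coeff n P) 0 (ENNReal.ofReal r) := by
  set p := FormalMultilinearSeries.ofScalars 𝕜 fun n => coeff n P
  have hradius : ENNReal.ofReal r ≤ p.radius := by
    refine ENNReal.le_of_forall_nnreal_lt fun u hu => ?_
    rw [ENNReal.lt_ofReal_iff_toReal_lt ENNReal.coe_ne_top, ENNReal.coe_toReal] at hu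
    refine p.le_radius_of_summable ?_
    have hmid := h ((u + r) / 2) (by linarith [u.2]) (by linarith)
    have hle : ‖((u : ℝ) : 𝕜)‖ ≤ ‖(((u + r) / 2 : ℝ) : 𝕜)‖ := by
      rw [RCLike.norm_ofReal, RCLike.norm_ofReal]
      exact abs_le_abs_of_nonneg u.2 (by linarith)
    have hsummable := (hmid.of_norm_le hle).norm
    simpa only [p, FormalMultilinearSeries.ofScalars_norm, norm_mul, norm_pow,
      RCLike.norm_ofReal, NNReal.abs_eq] using hsummable
  have hpos : 0 < ENNReal.ofReal r := ENNReal.ofReal_pos.2 hr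
  refine ((p.hasFPowerSeriesOnBall (hpos.trans_le hradius)).mono hpos hradius).congr
    fun z _ => tsum_congr fun n => ?_
  simp only [p, FormalMultilinearSeries.ofScalars_apply_eq, smul_eq_mul]

theorem differentiableOn_seriesSum (h : ∀ x : ℝ, 0 < x → x < r → SummableAt P (x : 𝕜)) :
    DifferentiableOn 𝕜 (seriesSum P) (Metric.ball 0 r) := by
  obtain hr | hr := le_or_gt r 0
  · rw [Metric.ball_eq_empty.2 hr]
    exact differentiableOn_empty
  · rw [← Metric.eball_ofReal]
    exact (hasFPowerSeriesOnBall_seriesSum hr h).differentiableOn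

theorem eq_of_eventually_hasSumAt
    (h : ∀ᶠ x : ℝ in 𝓝[>] 0, ∃ s, HasSumAt P (x : 𝕜) s ∧ HasSumAt Q (x : 𝕜) s) : P = Q := by
  obtain ⟨r, hr, hsum⟩ : ∃ r > 0, ∀ x : ℝ, 0 < x → x < r → HasSumAt (P - Q) (x : 𝕜) 0 := by
    obtain ⟨r, hr, hsub⟩ := mem_nhdsGT_iff_exists_Ioo_subset.1 h
    refine ⟨r, hr, fun x hx hxr => ?_⟩
    obtain ⟨s, hP, hQ⟩ := hsub ⟨hx, hxr⟩
    simpa only [sub_self] using hP.sub hQ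
  have hseries := hasFPowerSeriesOnBall_seriesSum hr fun x hx hxr => (hsum x hx hxr).summableAt
  have hvanish : ∀ᶠ z in 𝓝 (0 : 𝕜), seriesSum (P - Q) z = 0 := by
    refine (hseries.analyticAt.frequently_eq_iff_eventually_eq analyticAt_const).1 ?_
    have hofReal : Tendsto (fun x : ℝ => (x : 𝕜)) (𝓝[>] 0) (𝓝[≠] 0) := by
      refine tendsto_nhdsWithin_iff.2 ⟨?_, ?_⟩
      · simpa only [RCLike.ofReal_zero] using
          (RCLike.continuous_ofReal.tendsto (0 : ℝ)).mono_left nhdsWithin_le_nhds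
      · filter_upwards [self_mem_nhdsWithin] with x hx
        exact RCLike.ofReal_ne_zero.2 (ne_of_gt hx)
    refine hofReal.frequently (Eventually.frequently ?_)
    filter_upwards [Ioo_mem_nhdsGT hr] with x hx
    exact (hsum x hx.1 hx.2).seriesSum_eq
  have hzero := (hseries.hasFPowerSeriesAt.congr hvanish).eq_zero
  ext n
  refine sub_eq_zero.1 ((map_sub (coeff n) P Q).symm.trans ?_)
  rw [← FormalMultilinearSeries.coeff_ofScalars (𝕜 := 𝕜) (p := fun n => coeff n (P - Q)), hzero]
  rfl

theorem HasSumAt.map_ofReal {P : ℝ⟦X⟧} {x s : ℝ} (h : HasSumAt P x s) :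
    HasSumAt (PowerSeries.map (algebraMap ℝ 𝕜) P) (x : 𝕜) s := by
  simpa only [HasSumAt, coeff_map, RCLike.algebraMap_eq_ofReal, RCLike.ofReal_mul,
    RCLike.ofReal_pow] using (RCLike.hasSum_ofReal 𝕜).2 h

end SeriesSum

section SeriesComp

open PowerSeries

variable {C P M L : ℝ⟦X⟧} {x y s S : ℝ}

theorem HasSumAt.nonneg (h : HasSumAt P x s) (hP : ∀ n, 0 ≤ coeff n P) (hx : 0 ≤ x) : 0 ≤ s :=
  HasSum.nonneg (fun n => mul_nonneg (hP n) (pow_nonneg hx n)) h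

theorem HasSumAt.coeff_mul_pow_le (h : HasSumAt P x s) (hP : ∀ n, 0 ≤ coeff n P) (hx : 0 ≤ x)
    (n : ℕ) : coeff n P * x ^ n ≤ s :=
  le_hasSum h n fun k _ => mul_nonneg (hP k) (pow_nonneg hx k)

theorem SummableAt.of_nonneg_of_le (h : SummableAt P x) (hy : 0 ≤ y) (hyx : y ≤ x) :
    SummableAt P y :=
  h.of_norm_le (by rwa [Real.norm_of_nonneg hy, Real.norm_of_nonneg (hy.trans hyx)])

theorem coeff_pow_nonneg (hP : ∀ n, 0 ≤ coeff n P) (k n : ℕ) : 0 ≤ coeff n (P ^ k) := by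
  induction k generalizing n with
  | zero =>
    rw [pow_zero, coeff_one]
    split_ifs <;> norm_num
  | succ k ih =>
    rw [pow_succ, coeff_mul]
    exact Finset.sum_nonneg fun p _ => mul_nonneg (ih p.1) (hP p.2)

/-- The composition `∑ₖ cₖ Pᵏ` of power series over `ℝ`, formed by summing infinite series for
its coefficients, so that `P` may have a constant term. -/
noncomputable def seriesComp (C P : ℝ⟦X⟧) : ℝ⟦X⟧ :=
  PowerSeries.mk fun n => ∑' k, coeff k C * coeff n (P ^ k)

theorem seriesComp_eq_subst (hP : constantCoeff P = 0) : seriesComp C P = C.subst P := by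
  have hsubst := HasSubst.of_constantCoeff_zero' hP
  ext n
  rw [seriesComp, coeff_mk, coeff_subst' hsubst]
  exact tsum_eq_finsum (coeff_subst_finite' hsubst C n)

theorem constantCoeff_seriesComp (hP : constantCoeff P = 0) :
    constantCoeff (seriesComp C P) = constantCoeff C := by
  have hsingle : ∀ k ≠ 0, coeff k C * coeff 0 (P ^ k) = 0 := fun k hk => by
    rw [coeff_zero_eq_constantCoeff_apply, map_pow, hP, zero_pow hk, mul_zero]
  rw [← coeff_zero_eq_constantCoeff_apply, seriesComp, coeff_mk, tsum_eq_single 0 hsingle,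
    pow_zero, coeff_zero_one, mul_one, coeff_zero_eq_constantCoeff_apply]

theorem coeff_one_seriesComp (hP : constantCoeff P = 0) :
    coeff 1 (seriesComp C P) = coeff 1 C * coeff 1 P := by
  have hsingle : ∀ k ≠ 1, coeff k C * coeff 1 (P ^ k) = 0 := fun k hk => by
    obtain rfl | hk₀ := eq_or_ne k 0
    · rw [coeff_one_pow, Nat.cast_zero, zero_mul, zero_mul, mul_zero]
    · rw [coeff_one_pow, hP, zero_pow (by omega), mul_zero, mul_zero]
  rw [seriesComp, coeff_mk, tsum_eq_single 1 hsingle, pow_one]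

theorem coeff_seriesComp_nonneg (hC : ∀ k, 0 ≤ coeff k C) (hP : ∀ n, 0 ≤ coeff n P) (n : ℕ) :
    0 ≤ coeff n (seriesComp C P) := by
  rw [seriesComp, coeff_mk]
  exact tsum_nonneg fun k => mul_nonneg (hC k) (coeff_pow_nonneg hP k n)

theorem summable_coeff_mul_coeff_pow_mul_pow (hC : ∀ k, 0 ≤ coeff k C) (hP : ∀ n, 0 ≤ coeff n P)
    (hx : 0 ≤ x) (hPx : HasSumAt P x s) (hCs : SummableAt C s) :
    Summable fun p : ℕ × ℕ => coeff p.1 C * coeff p.2 (P ^ p.1) * x ^ p.2 := by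
  have hrow (k : ℕ) :
      HasSum (fun n => coeff k C * coeff n (P ^ k) * x ^ n) (coeff k C * s ^ k) := by
    simpa only [mul_assoc] using (hPx.pow k).mul_left (coeff k C)
  refine (summable_prod_of_nonneg fun p => mul_nonneg
    (mul_nonneg (hC p.1) (coeff_pow_nonneg hP p.1 p.2)) (pow_nonneg hx p.2)).2
    ⟨fun k => (hrow k).summable, ?_⟩
  simpa only [SummableAt, (hrow _).tsum_eq] using hCs

theorem summable_coeff_mul_coeff_pow (hC : ∀ k, 0 ≤ coeff k C) (hP : ∀ n, 0 ≤ coeff n P)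
    (hx : 0 < x) (hPx : HasSumAt P x s) (hCs : SummableAt C s) (n : ℕ) :
    Summable fun k => coeff k C * coeff n (P ^ k) :=
  (summable_mul_right_iff (pow_ne_zero n hx.ne')).1
    ((summable_coeff_mul_coeff_pow_mul_pow hC hP hx.le hPx hCs).prod_symm.prod_factor n)

theorem HasSumAt.seriesComp (hC : ∀ k, 0 ≤ coeff k C) (hP : ∀ n, 0 ≤ coeff n P) (hx : 0 ≤ x)
    (hPx : HasSumAt P x s) (hCs : HasSumAt C s S) : HasSumAt (seriesComp C P) x S := by
  have hdouble := summable_coeff_mul_coeff_pow_mul_pow hC hP hx hPx hCs.summableAt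
  have htotal : ∑' p : ℕ × ℕ, coeff p.1 C * coeff p.2 (P ^ p.1) * x ^ p.2 = S := by
    rw [hdouble.tsum_prod, ← hCs.seriesSum_eq, seriesSum]
    refine tsum_congr fun k => ?_
    simp only [mul_assoc]
    rw [tsum_mul_left, ← (hPx.pow k).seriesSum_eq, seriesSum]
  have hswap := (Equiv.prodComm ℕ ℕ).hasSum_iff.2 (htotal ▸ hdouble.hasSum)
  have hcolumns := hswap.prod_fiberwise fun n => (hswap.summable.prod_factor n).hasSum
  simp only [HasSumAt, _root_.seriesComp, coeff_mk, ← tsum_mul_right]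
  exact hcolumns

theorem eq_seriesComp_exp (hM : constantCoeff M = 1) (hL : constantCoeff L = 0)
    (hder : d⁄dX ℝ M = d⁄dX ℝ L * M) : M = seriesComp (exp ℝ) L := by
  set E := seriesComp (exp ℝ) L
  have hE : constantCoeff E = 1 := (constantCoeff_seriesComp hL).trans constantCoeff_exp
  have hE_der : d⁄dX ℝ E = E * d⁄dX ℝ L := by
    rw [show E = (exp ℝ).subst L from seriesComp_eq_subst hL,
      derivative_subst (HasSubst.of_constantCoeff_zero' hL), derivative_exp]
  have hE_inv : E * E⁻¹ = 1 := PowerSeries.mul_inv_cancel _ (hE.trans_ne one_ne_zero)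
  suffices M * E⁻¹ = 1 by
    rw [← mul_one M, ← hE_inv, mul_left_comm, this, mul_one]
  refine derivative.ext ?_ ?_
  · rw [Derivation.leibniz, derivative_inv', hder, hE_der, derivative_one, smul_eq_mul, smul_eq_mul]
    linear_combination (-(M * d⁄dX ℝ L * E⁻¹)) * hE_inv
  · rw [map_mul, constantCoeff_inv, hM, hE, map_one, inv_one, mul_one]

theorem coeff_exp_real (k : ℕ) : coeff k (exp ℝ) = (k.factorial : ℝ)⁻¹ := by
  rw [coeff_exp, one_div, map_inv₀, map_natCast]

theorem coeff_exp_nonneg (k : ℕ) : 0 ≤ coeff k (exp ℝ) := by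
  rw [coeff_exp_real]
  positivity

theorem hasSumAt_exp (x : ℝ) : HasSumAt (exp ℝ) x (Real.exp x) := by
  simpa only [HasSumAt, coeff_exp_real, inv_mul_eq_div, Real.exp_eq_exp_ℝ] using
    NormedSpace.expSeries_div_hasSum_exp x

end SeriesComp

/-! ### Laws with exponential moments -/

section Renewal

open PowerSeries Filter Topology

theorem exists_hasSumAt_of_differentiableOn {G : ℂ → ℂ} {R : ℝ}
    (hG : DifferentiableOn ℂ G (Metric.ball 0 R)) :
    ∃ P : ℂ⟦X⟧, ∀ z : ℂ, ‖z‖ < R → HasSumAt P z (G z) := by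
  refine ⟨PowerSeries.mk fun n => (n.factorial : ℂ)⁻¹ * iteratedDeriv n G 0, fun z hz => ?_⟩
  have htaylor := Complex.hasSum_taylorSeries_on_ball hG (mem_ball_zero_iff.2 hz)
  simpa only [HasSumAt, coeff_mk, smul_eq_mul, sub_zero, mul_assoc, mul_comm (z ^ _)] using htaylor

theorem tendsto_coeff_of_hasSumAt_div_one_sub {U : ℂ⟦X⟧} {G : ℂ → ℂ} {R : ℝ} (hR : 1 < R)
    (hG : DifferentiableOn ℂ G (Metric.ball 0 R))
    (hU : ∀ x : ℝ, 0 < x → x < 1 → HasSumAt U (x : ℂ) (G x / (1 - x))) :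
    Tendsto (fun n => coeff n U) atTop (𝓝 (G 1)) := by
  obtain ⟨P, hP⟩ := exists_hasSumAt_of_differentiableOn hG
  have hmul : P = U * (1 - X) := by
    refine eq_of_eventually_hasSumAt (𝕜 := ℂ) ?_
    filter_upwards [Ioo_mem_nhdsGT zero_lt_one] with x hx
    have hnorm : ‖(x : ℂ)‖ < R := by
      rw [Complex.norm_of_nonneg hx.1.le]
      exact hx.2.trans hR
    have hne : (1 : ℂ) - x ≠ 0 := sub_ne_zero.2 (by exact_mod_cast hx.2.ne')
    have hone_sub : HasSumAt (1 - X : ℂ⟦X⟧) (x : ℂ) (1 - x) := by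
      simpa only [map_one, X_eq, pow_one, one_mul] using
        (hasSumAt_C 1 (x : ℂ)).sub (hasSumAt_monomial 1 1 (x : ℂ))
    refine ⟨G x, hP x hnorm, ?_⟩
    have hprod := (hU x hx.1 hx.2).mul hone_sub
    rw [div_mul_cancel₀ _ hne] at hprod
    exact hprod
  have hpartial (n : ℕ) : coeff n U = ∑ j ∈ Finset.range (n + 1), coeff j P := by
    have hU_eq : U = P * PowerSeries.mk 1 := by
      rw [hmul, mul_assoc, mul_comm (1 - X), mk_one_mul_one_sub_eq_one, mul_one]
    rw [hU_eq, coeff_mul, Finset.Nat.sum_antidiagonal_eq_sum_range_succ_mk]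
    simp only [coeff_mk, Pi.one_apply, mul_one]
  have hsum : HasSum (fun n => coeff n P) (G 1) := by
    simpa only [HasSumAt, one_pow, mul_one] using hP 1 (by rwa [norm_one])
  simp only [hpartial]
  exact hsum.tendsto_sum_nat.comp (tendsto_add_atTop_nat 1)

theorem exists_ball_subset_of_closedBall_subset {E : Type*} [NormedAddCommGroup E]
    [NormedSpace ℝ E] [ProperSpace E] {U : Set E} {x : E} {r : ℝ} (hU : IsOpen U) (hr : 0 ≤ r)
    (h : Metric.closedBall x r ⊆ U) : ∃ R > r, Metric.ball x R ⊆ U := by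
  obtain ⟨δ, hδ, hsub⟩ := (isCompact_closedBall x r).exists_thickening_subset_open hU h
  rw [thickening_closedBall hδ hr] at hsub
  exact ⟨δ + r, lt_add_of_pos_left r hδ, hsub⟩

/-- `F` is the generating function of a probability law on `ℕ` which charges `1` and has
exponential moments, in the form that `F` converges at `r > 1`. -/
structure IsExpMomentLaw (F : ℝ⟦X⟧) (r : ℝ) : Prop where
  coeff_nonneg (n : ℕ) : 0 ≤ coeff n F
  coeff_one_pos : 0 < coeff 1 F
  hasSumAt_one : HasSumAt F 1 1
  one_lt : 1 < r
  summableAt : SummableAt F r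

/-- The expectation of the law with generating function `F`. -/
noncomputable def mean (F : ℝ⟦X⟧) : ℝ := deriv (seriesSum F) 1

namespace IsExpMomentLaw

variable {F : ℝ⟦X⟧} {r x : ℝ}

theorem hasSumAt (hF : IsExpMomentLaw F r) (hx : 0 ≤ x) (hxr : x ≤ r) :
    HasSumAt F x (seriesSum F x) :=
  (hF.summableAt.of_nonneg_of_le hx hxr).hasSumAt

theorem seriesSum_one (hF : IsExpMomentLaw F r) : seriesSum F 1 = 1 := hF.hasSumAt_one.seriesSum_eq

theorem seriesSum_nonneg (hF : IsExpMomentLaw F r) (hx : 0 ≤ x) (hxr : x ≤ r) :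
    0 ≤ seriesSum F x :=
  (hF.hasSumAt hx hxr).nonneg hF.coeff_nonneg hx

theorem hasSumAt_map (hF : IsExpMomentLaw F r) {z : ℂ} (hz : ‖z‖ ≤ r) :
    HasSumAt (PowerSeries.map (algebraMap ℝ ℂ) F) z
      (seriesSum (PowerSeries.map (algebraMap ℝ ℂ) F) z) := by
  refine ((hF.summableAt.hasSumAt.map_ofReal (𝕜 := ℂ)).summableAt.of_norm_le ?_).hasSumAt
  rwa [RCLike.norm_ofReal, abs_of_pos (zero_lt_one.trans hF.one_lt)]

theorem seriesSum_map_ofReal (hF : IsExpMomentLaw F r) (hx : 0 ≤ x) (hxr : x ≤ r) :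
    seriesSum (PowerSeries.map (algebraMap ℝ ℂ) F) (x : ℂ) = seriesSum F x :=
  (hF.hasSumAt hx hxr).map_ofReal.seriesSum_eq

theorem coeff_one_mul_one_sub_re_le (hF : IsExpMomentLaw F r) {z : ℂ} (hz : ‖z‖ ≤ 1) :
    coeff 1 F * (1 - z.re) ≤ 1 - (seriesSum (PowerSeries.map (algebraMap ℝ ℂ) F) z).re := by
  have hre := Complex.hasSum_re (hF.hasSumAt_map (hz.trans hF.one_lt.le))
  have hsum := HasSum.sub hF.hasSumAt_one hre
  have hterm (n : ℕ) : coeff n F * 1 ^ n - (coeff n (PowerSeries.map (algebraMap ℝ ℂ) F) * z ^ n).re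
      = coeff n F * (1 - (z ^ n).re) := by
    rw [coeff_map, Complex.coe_algebraMap, Complex.re_ofReal_mul, one_pow, mul_sub]
  simp only [hterm] at hsum
  have hnonneg (n : ℕ) : 0 ≤ coeff n F * (1 - (z ^ n).re) := by
    refine mul_nonneg (hF.coeff_nonneg n) (sub_nonneg.2 ((Complex.re_le_norm _).trans ?_))
    rw [norm_pow]
    exact pow_le_one₀ (norm_nonneg z) hz
  simpa only [pow_one] using le_hasSum hsum 1 fun n _ => hnonneg n

theorem coeff_one_mul_one_sub_le (hF : IsExpMomentLaw F r) (hx : 0 ≤ x) (hx₁ : x ≤ 1) :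
    coeff 1 F * (1 - x) ≤ 1 - seriesSum F x := by
  have hle := hF.coeff_one_mul_one_sub_re_le (z := x) (by rwa [Complex.norm_of_nonneg hx])
  rwa [hF.seriesSum_map_ofReal hx (hx₁.trans hF.one_lt.le), Complex.ofReal_re,
    Complex.ofReal_re] at hle

theorem seriesSum_map_ne_one (hF : IsExpMomentLaw F r) {z : ℂ} (hz : ‖z‖ ≤ 1) (hz₁ : z ≠ 1) :
    seriesSum (PowerSeries.map (algebraMap ℝ ℂ) F) z ≠ 1 := by
  intro h
  have hle := hF.coeff_one_mul_one_sub_re_le hz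
  rw [h, Complex.one_re, sub_self] at hle
  have hre : 1 ≤ z.re := by
    by_contra! hlt
    exact hle.not_gt (mul_pos hF.coeff_one_pos (sub_pos.2 hlt))
  have hre_eq : z.re = 1 := le_antisymm ((Complex.re_le_norm z).trans hz) hre
  have him : z.im = 0 := Complex.abs_re_eq_norm.1
    ((Complex.abs_re_le_norm z).antisymm (by rwa [hre_eq, abs_one]))
  exact hz₁ (Complex.ext hre_eq him)

theorem seriesSum_lt_one (hF : IsExpMomentLaw F r) (hx : 0 ≤ x) (hx₁ : x < 1) :
    seriesSum F x < 1 :=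
  sub_pos.1 ((mul_pos hF.coeff_one_pos (sub_pos.2 hx₁)).trans_le
    (hF.coeff_one_mul_one_sub_le hx hx₁.le))

theorem hasDerivAt_seriesSum (hF : IsExpMomentLaw F r) : HasDerivAt (seriesSum F) (mean F) 1 := by
  have hdiff : DifferentiableOn ℝ (seriesSum F) (Metric.ball 0 r) :=
    differentiableOn_seriesSum fun x hx hxr => (hF.hasSumAt hx.le hxr.le).summableAt
  refine (hdiff.differentiableAt (Metric.isOpen_ball.mem_nhds ?_)).hasDerivAt
  rw [mem_ball_zero_iff, norm_one]
  exact hF.one_lt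

theorem mean_pos (hF : IsExpMomentLaw F r) : 0 < mean F := by
  refine hF.coeff_one_pos.trans_le ?_
  have hslope : Tendsto (slope (seriesSum F) 1) (𝓝[<] 1) (𝓝 (mean F)) :=
    (hasDerivAt_iff_tendsto_slope.1 hF.hasDerivAt_seriesSum).mono_left
      (nhdsWithin_mono _ fun x hx => ne_of_lt hx)
  refine ge_of_tendsto hslope ?_
  filter_upwards [Ioo_mem_nhdsLT zero_lt_one] with x hx
  rw [slope_def_field, hF.seriesSum_one, le_div_iff_of_neg (sub_neg.2 hx.2)]
  linarith [hF.coeff_one_mul_one_sub_le hx.1.le hx.2.le]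

theorem differentiableOn_seriesSum_map (hF : IsExpMomentLaw F r) :
    DifferentiableOn ℂ (seriesSum (PowerSeries.map (algebraMap ℝ ℂ) F)) (Metric.ball 0 r) :=
  differentiableOn_seriesSum fun _ hx hxr =>
    (hF.hasSumAt hx.le hxr.le).map_ofReal.summableAt

theorem ball_mem_nhds_one (hF : IsExpMomentLaw F r) : Metric.ball (0 : ℂ) r ∈ 𝓝 1 :=
  Metric.isOpen_ball.mem_nhds (by rw [mem_ball_zero_iff, norm_one]; exact hF.one_lt)

theorem deriv_seriesSum_map (hF : IsExpMomentLaw F r) :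
    deriv (seriesSum (PowerSeries.map (algebraMap ℝ ℂ) F)) 1 = mean F := by
  have hderiv : HasDerivAt (seriesSum (PowerSeries.map (algebraMap ℝ ℂ) F))
      (deriv (seriesSum (PowerSeries.map (algebraMap ℝ ℂ) F)) 1) ((1 : ℝ) : ℂ) := by
    rw [Complex.ofReal_one]
    exact (hF.differentiableOn_seriesSum_map.differentiableAt hF.ball_mem_nhds_one).hasDerivAt
  refine hderiv.comp_ofReal.unique (hF.hasDerivAt_seriesSum.ofReal_comp.congr_of_eventuallyEq ?_)
  filter_upwards [Ioo_mem_nhds zero_lt_one hF.one_lt] with x hx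
  exact hF.seriesSum_map_ofReal hx.1.le hx.2.le

theorem dslope_seriesSum_map_of_ne (hF : IsExpMomentLaw F r) {z : ℂ} (hz : z ≠ 1) :
    dslope (seriesSum (PowerSeries.map (algebraMap ℝ ℂ) F)) 1 z =
      (seriesSum (PowerSeries.map (algebraMap ℝ ℂ) F) z - 1) / (z - 1) := by
  have hone : seriesSum (PowerSeries.map (algebraMap ℝ ℂ) F) 1 = 1 := by
    have h := hF.seriesSum_map_ofReal zero_le_one hF.one_lt.le
    rwa [hF.seriesSum_one, Complex.ofReal_one] at h
  rw [dslope_of_ne _ hz, slope_def_field, hone]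

theorem dslope_seriesSum_map_ne_zero (hF : IsExpMomentLaw F r) {z : ℂ} (hz : ‖z‖ ≤ 1) :
    dslope (seriesSum (PowerSeries.map (algebraMap ℝ ℂ) F)) 1 z ≠ 0 := by
  obtain rfl | hz₁ := eq_or_ne z 1
  · rw [dslope_same, hF.deriv_seriesSum_map]
    exact_mod_cast hF.mean_pos.ne'
  · rw [hF.dslope_seriesSum_map_of_ne hz₁]
    exact div_ne_zero (sub_ne_zero.2 (hF.seriesSum_map_ne_one hz hz₁)) (sub_ne_zero.2 hz₁)

theorem exists_differentiableOn_inv_dslope (hF : IsExpMomentLaw F r) :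
    ∃ R > 1, DifferentiableOn ℂ (fun z =>
      (dslope (seriesSum (PowerSeries.map (algebraMap ℝ ℂ) F)) 1 z)⁻¹) (Metric.ball 0 R) := by
  set D := dslope (seriesSum (PowerSeries.map (algebraMap ℝ ℂ) F)) 1
  have hD : DifferentiableOn ℂ D (Metric.ball 0 r) :=
    (Complex.differentiableOn_dslope hF.ball_mem_nhds_one).2 hF.differentiableOn_seriesSum_map
  obtain ⟨R, hR, hsub⟩ := exists_ball_subset_of_closedBall_subset
    (hD.continuousOn.isOpen_inter_preimage Metric.isOpen_ball isOpen_compl_singleton)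
    zero_le_one fun z hz => by
      rw [mem_closedBall_zero_iff] at hz
      exact ⟨mem_ball_zero_iff.2 (hz.trans_lt hF.one_lt), hF.dslope_seriesSum_map_ne_zero hz⟩
  exact ⟨R, hR, (hD.mono fun z hz => (hsub hz).1).fun_inv fun z hz => (hsub hz).2⟩

theorem hasSumAt_renewal (hF : IsExpMomentLaw F r) (hx : 0 ≤ x) (hx₁ : x < 1) :
    HasSumAt (seriesComp (PowerSeries.mk 1) F) x (1 - seriesSum F x)⁻¹ := by
  have hsum := hF.hasSumAt hx (hx₁.trans hF.one_lt).le
  refine HasSumAt.seriesComp (fun k => ?_) hF.coeff_nonneg hx hsum ?_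
  · rw [coeff_mk]
    exact zero_le_one
  · simpa only [HasSumAt, coeff_mk, Pi.one_apply, one_mul] using
      hasSum_geometric_of_lt_one (hsum.nonneg hF.coeff_nonneg hx) (hF.seriesSum_lt_one hx hx₁)

theorem summable_coeff_pow (hF : IsExpMomentLaw F r) (n : ℕ) :
    Summable fun k => coeff n (F ^ k) := by
  have hhalf := hF.hasSumAt one_half_pos.le (one_half_lt_one.trans hF.one_lt).le
  have hlt := hF.seriesSum_lt_one one_half_pos.le one_half_lt_one
  have hgeom : SummableAt (PowerSeries.mk 1) (seriesSum F (1 / 2)) := by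
    simpa only [SummableAt, coeff_mk, Pi.one_apply, one_mul] using
      summable_geometric_of_lt_one (hhalf.nonneg hF.coeff_nonneg one_half_pos.le) hlt
  simpa only [coeff_mk, Pi.one_apply, one_mul] using
    summable_coeff_mul_coeff_pow (fun k => by rw [coeff_mk]; exact zero_le_one) hF.coeff_nonneg
      one_half_pos hhalf hgeom n

theorem tendsto_tsum_coeff_pow (hF : IsExpMomentLaw F r) :
    Tendsto (fun n => ∑' k, coeff n (F ^ k)) atTop (𝓝 (mean F)⁻¹) := by
  obtain ⟨R, hR, hdiff⟩ := hF.exists_differentiableOn_inv_dslope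
  have hlim := tendsto_coeff_of_hasSumAt_div_one_sub
    (U := PowerSeries.map (algebraMap ℝ ℂ) (seriesComp (PowerSeries.mk 1) F)) hR hdiff ?_
  · rw [dslope_same, hF.deriv_seriesSum_map] at hlim
    have hre := (Complex.continuous_re.tendsto _).comp hlim
    simpa only [Function.comp_def, coeff_map, Complex.coe_algebraMap, Complex.ofReal_re,
      ← Complex.ofReal_inv, seriesComp, coeff_mk, Pi.one_apply, one_mul] using hre
  · intro x hx hx₁
    have hne : (x : ℂ) - 1 ≠ 0 := sub_ne_zero.2 (by exact_mod_cast hx₁.ne)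
    rw [hF.dslope_seriesSum_map_of_ne (sub_ne_zero.1 hne),
      hF.seriesSum_map_ofReal hx.le (hx₁.trans hF.one_lt).le]
    have hsum := (hF.hasSumAt_renewal hx.le hx₁).map_ofReal (𝕜 := ℂ)
    convert! hsum using 1
    rw [← neg_sub (x : ℂ), inv_div, div_neg, div_div_cancel_left' hne, RCLike.ofReal_inv,
      RCLike.ofReal_sub, RCLike.ofReal_one, ← inv_neg, neg_sub]
    rfl

end IsExpMomentLaw

end Renewal

section LocalLimit

open PowerSeries Filter Topology

namespace IsExpMomentLaw

variable {F : ℝ⟦X⟧} {r x c δ : ℝ}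

theorem coeff_pow_le (hF : IsExpMomentLaw F r) (hx : 0 < x) (hxr : x ≤ r) (k n : ℕ) :
    coeff n (F ^ k) ≤ seriesSum F x ^ k / x ^ n := by
  rw [le_div_iff₀ (pow_pos hx n)]
  exact ((hF.hasSumAt hx.le hxr).pow k).coeff_mul_pow_le (coeff_pow_nonneg hF.coeff_nonneg k)
    hx.le n

theorem tsum_indicator_coeff_pow_le (hF : IsExpMomentLaw F r) (hx : 0 < x) (hxr : x ≤ r)
    (hlt : seriesSum F x * Real.exp (-δ) < 1) (n : ℕ) :
    ∑' k, {k : ℕ | δ * (k - c * n) ≤ 0}.indicator (fun k => coeff n (F ^ k)) k ≤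
      (1 - seriesSum F x * Real.exp (-δ))⁻¹ * (Real.exp (δ * c) / x) ^ n := by
  have hF_nonneg : 0 ≤ seriesSum F x := hF.seriesSum_nonneg hx.le hxr
  have hgeom := (hasSum_geometric_of_lt_one (mul_nonneg hF_nonneg (Real.exp_pos (-δ)).le)
    hlt).mul_right ((Real.exp (δ * c) / x) ^ n)
  refine hasSum_le (fun k => ?_) ((hF.summable_coeff_pow n).indicator _).hasSum hgeom
  refine Set.indicator_apply_le' (fun hk => ?_) fun _ => by positivity
  have hexp : 1 ≤ Real.exp (-δ) ^ k * Real.exp (δ * c) ^ n := by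
    rw [← Real.exp_nat_mul, ← Real.exp_nat_mul, ← Real.exp_add]
    have hk : δ * (k - c * n) ≤ 0 := hk
    exact Real.one_le_exp (by linarith)
  calc coeff n (F ^ k) ≤ seriesSum F x ^ k / x ^ n := hF.coeff_pow_le hx hxr k n
    _ ≤ seriesSum F x ^ k / x ^ n * (Real.exp (-δ) ^ k * Real.exp (δ * c) ^ n) :=
      le_mul_of_one_le_right (by positivity) hexp
    _ = (seriesSum F x * Real.exp (-δ)) ^ k * (Real.exp (δ * c) / x) ^ n := by
      rw [mul_pow, div_pow]
      ring

theorem hasDerivAt_seriesSum_exp_mul_exp (hF : IsExpMomentLaw F r) (a b : ℝ) :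
    HasDerivAt (fun u => seriesSum F (Real.exp (u * a)) * Real.exp (-(u * b))) (mean F * a - b)
      0 := by
  have hexp_a : HasDerivAt (fun u => Real.exp (u * a)) a 0 := by
    simpa using ((hasDerivAt_id (0 : ℝ)).mul_const a).exp
  have hexp_b : HasDerivAt (fun u => Real.exp (-(u * b))) (-b) 0 := by
    simpa using ((hasDerivAt_id (0 : ℝ)).mul_const b).neg.exp
  have hF_exp : HasDerivAt (fun u => seriesSum F (Real.exp (u * a))) (mean F * a) 0 := by
    refine HasDerivAt.comp (h₂ := seriesSum F) 0 ?_ hexp_a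
    simpa using hF.hasDerivAt_seriesSum
  convert! hF_exp.mul hexp_b using 1
  simp [hF.seriesSum_one, sub_eq_add_neg]

theorem exists_seriesSum_mul_exp_lt_one (hF : IsExpMomentLaw F r) (hc : 0 < c)
    (hne : c * mean F ≠ 1) :
    ∃ x δ : ℝ, 0 < x ∧ x < r ∧ 0 < δ * (1 - c * mean F) ∧
      seriesSum F x * Real.exp (-δ) < 1 ∧ Real.exp (δ * c) < x := by
  set μ := mean F
  have hμ : 0 < μ := hF.mean_pos
  -- Take `x = exp s` and `δ = s (μ + c⁻¹) / 2`, for a small `s` of the sign of `1 - c μ`.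
  set d := 1 - c * μ
  set e := d * (μ + c⁻¹) / 2
  have hd : 0 < d ^ 2 := sq_pos_of_ne_zero (sub_ne_zero.2 hne.symm)
  have hderiv_neg : μ * d - e < 0 := by
    have : μ * d - e = -(d ^ 2 / (2 * c)) := by
      simp only [e, d]
      field_simp
      ring
    rw [this]
    exact neg_lt_zero.2 (div_pos hd (by positivity))
  have hslope : ∀ᶠ u in 𝓝[>] 0,
      slope (fun u => seriesSum F (Real.exp (u * d)) * Real.exp (-(u * e))) 0 u < 0 :=
    ((hasDerivAt_iff_tendsto_slope.1 (hF.hasDerivAt_seriesSum_exp_mul_exp d e)).mono_left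
      (nhdsWithin_mono _ fun u hu => ne_of_gt hu)).eventually_lt_const hderiv_neg
  have hlt_r : ∀ᶠ u in 𝓝[>] 0, Real.exp (u * d) < r := by
    have hcont : Tendsto (fun u => Real.exp (u * d)) (𝓝 0) (𝓝 1) := by
      simpa using (show Continuous fun u => Real.exp (u * d) by fun_prop).tendsto 0
    exact (hcont.eventually_lt_const hF.one_lt).filter_mono nhdsWithin_le_nhds
  obtain ⟨u, ⟨hu_slope, hur⟩, hu⟩ := ((hslope.and hlt_r).and self_mem_nhdsWithin).exists
  have hu : 0 < u := hu
  refine ⟨Real.exp (u * d), u * e, Real.exp_pos _, hur, ?_, ?_, ?_⟩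
  · rw [show u * e * d = u * d ^ 2 * (μ + c⁻¹) / 2 by ring]
    have := mul_pos hu hd
    positivity
  · rw [slope_neg_iff_of_le hu.le] at hu_slope
    simpa [hF.seriesSum_one] using hu_slope
  · rw [Real.exp_lt_exp, ← sub_pos]
    have : u * d - u * e * c = u * d ^ 2 / 2 := by
      simp only [e, d]
      field_simp
      ring
    rw [this]
    positivity

theorem tendsto_pow_mul_tsum_indicator (hF : IsExpMomentLaw F r) (hc : 0 < c)
    (hne : c * mean F ≠ 1) (q : ℕ) :
    Tendsto (fun n : ℕ => (n : ℝ) ^ q * ∑' k, {k : ℕ | (1 - c * mean F) * (k - c * n) ≤ 0}.indicator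
      (fun k => coeff n (F ^ k)) k) atTop (𝓝 0) := by
  obtain ⟨x, δ, hx, hxr, hδ, hlt, hexp⟩ := hF.exists_seriesSum_mul_exp_lt_one hc hne
  have hset (n : ℕ) : {k : ℕ | (1 - c * mean F) * (k - c * n) ≤ 0} =
      {k : ℕ | δ * (k - c * n) ≤ 0} := by
    ext k
    simp only [Set.mem_ofPred_eq]
    grind only [mul_nonpos_iff, mul_pos_iff]
  have hgeom := (tendsto_pow_const_mul_const_pow_of_lt_one q (div_pos (Real.exp_pos (δ * c)) hx).le
    ((div_lt_one hx).2 hexp)).const_mul (1 - seriesSum F x * Real.exp (-δ))⁻¹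
  rw [mul_zero] at hgeom
  refine squeeze_zero (fun n => ?_) (fun n => ?_) hgeom
  · exact mul_nonneg (by positivity) (tsum_nonneg fun k =>
      Set.indicator_nonneg (fun k _ => coeff_pow_nonneg hF.coeff_nonneg k n) k)
  · rw [mul_left_comm, hset]
    gcongr
    exact hF.tsum_indicator_coeff_pow_le hx hxr.le hlt n

theorem tendsto_pow_mul_tsum_indicator_abs (hF : IsExpMomentLaw F r) {ε : ℝ} (hε : 0 < ε)
    (hlt : ε < (mean F)⁻¹) (q : ℕ) :
    Tendsto (fun n : ℕ => (n : ℝ) ^ q * ∑' k, {k : ℕ | ε * n < |k - (mean F)⁻¹ * n|}.indicator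
      (fun k => coeff n (F ^ k)) k) atTop (𝓝 0) := by
  set μ := mean F
  have hμ : 0 < μ := hF.mean_pos
  have hlow_eq : 1 - (μ⁻¹ - ε) * μ = ε * μ := by field_simp; ring
  have hhigh_eq : 1 - (μ⁻¹ + ε) * μ = -(ε * μ) := by field_simp; ring
  have hεμ : 0 < ε * μ := mul_pos hε hμ
  have hlow := hF.tendsto_pow_mul_tsum_indicator (sub_pos.2 hlt) (by linarith) q
  have hhigh := hF.tendsto_pow_mul_tsum_indicator (add_pos (inv_pos.2 hμ) hε) (by linarith) q
  rw [hlow_eq] at hlow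
  rw [hhigh_eq] at hhigh
  have hsum := hlow.add hhigh
  rw [add_zero] at hsum
  have hcoeff (n k : ℕ) : 0 ≤ coeff n (F ^ k) := coeff_pow_nonneg hF.coeff_nonneg k n
  refine squeeze_zero (fun n => mul_nonneg (by positivity) (tsum_nonneg fun k =>
    Set.indicator_nonneg (fun k _ => hcoeff n k) k)) (fun n => ?_) hsum
  have hsummable := fun s : Set ℕ => (hF.summable_coeff_pow n).indicator s
  rw [← mul_add, ← (hsummable _).tsum_add (hsummable _)]
  refine mul_le_mul_of_nonneg_left ?_ (by positivity)
  refine (hsummable _).tsum_le_tsum (fun k => ?_) ((hsummable _).add (hsummable _))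
  refine Set.indicator_apply_le' (fun hk => ?_) fun _ =>
    add_nonneg (Set.indicator_nonneg (fun k _ => hcoeff n k) k)
      (Set.indicator_nonneg (fun k _ => hcoeff n k) k)
  obtain hk | hk := lt_abs.1 (show ε * n < |k - μ⁻¹ * n| from hk)
  · refine le_add_of_nonneg_of_le (Set.indicator_nonneg (fun k _ => hcoeff n k) k) ?_
    rw [Set.indicator_of_mem]
    exact mul_nonpos_of_nonpos_of_nonneg (neg_nonpos.2 hεμ.le) (by linarith)
  · refine le_add_of_le_of_nonneg ?_ (Set.indicator_nonneg (fun k _ => hcoeff n k) k)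
    rw [Set.indicator_of_mem]
    exact mul_nonpos_of_nonneg_of_nonpos hεμ.le (by linarith)

end IsExpMomentLaw

theorem exists_eventually_abs_rpow_mul_sub_le {α : ℕ → ℝ} {K p ν η : ℝ} (hν : 0 < ν)
    (hα : Tendsto (fun k : ℕ => α k * (k : ℝ) ^ p) atTop (𝓝 K)) (hη : 0 < η) :
    ∃ ε, 0 < ε ∧ ε < ν ∧ ∀ᶠ n : ℕ in atTop, ∀ k : ℕ, |k - ν * n| ≤ ε * n →
      |(n : ℝ) ^ p * α k - K * ν ^ (-p)| ≤ η := by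
  have hcont : ContinuousAt (fun z : ℝ × ℝ => z.1 * z.2 ^ (-p)) (K, ν) :=
    continuousAt_fst.mul (continuousAt_snd.rpow_const (Or.inl hν.ne'))
  obtain ⟨ε, hε, hclose⟩ := Metric.continuousAt_iff.1 hcont η hη
  obtain ⟨N, hN⟩ := Metric.tendsto_atTop.1 hα ε hε
  refine ⟨min (ε / 2) (ν / 2), by positivity, (min_le_right _ _).trans_lt (half_lt_self hν), ?_⟩
  have hlarge : Tendsto (fun n : ℕ => ν / 2 * (n : ℝ)) atTop atTop :=
    tendsto_natCast_atTop_atTop.const_mul_atTop (half_pos hν)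
  filter_upwards [hlarge.eventually_ge_atTop ((N : ℝ) + 1), eventually_gt_atTop 0]
    with n hn hn_pos k hk
  have hn_pos : (0 : ℝ) < n := by exact_mod_cast hn_pos
  have hkn : (N : ℝ) + 1 ≤ k := by
    have hle := hk.trans (mul_le_mul_of_nonneg_right (min_le_right _ _) hn_pos.le)
    linarith [(abs_le.1 hle).1]
  have hk_pos : (0 : ℝ) < k := by linarith [N.cast_nonneg (α := ℝ)]
  have hNk : N ≤ k := by exact_mod_cast (le_add_of_nonneg_right zero_le_one).trans hkn
  have hratio : |(k : ℝ) / n - ν| < ε := by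
    rw [div_sub' hn_pos.ne', abs_div, abs_of_pos hn_pos, div_lt_iff₀ hn_pos, mul_comm (n : ℝ)]
    refine hk.trans_lt (mul_lt_mul_of_pos_right ?_ hn_pos)
    exact (min_le_left _ _).trans_lt (half_lt_self hε)
  have hdist := hclose (x := (α k * (k : ℝ) ^ p, (k : ℝ) / n)) (max_lt (hN k hNk) hratio)
  have hrescale : α k * (k : ℝ) ^ p * ((k : ℝ) / n) ^ (-p) = (n : ℝ) ^ p * α k := by
    rw [Real.div_rpow hk_pos.le hn_pos.le, Real.rpow_neg hk_pos.le, Real.rpow_neg hn_pos.le]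
    have := (Real.rpow_pos_of_pos hk_pos p).ne'
    field_simp
  rw [hrescale, Real.dist_eq] at hdist
  exact hdist.le

namespace IsExpMomentLaw

variable {F : ℝ⟦X⟧} {r A p : ℝ} {α : ℕ → ℝ}

theorem summable_mul_coeff_pow (hF : IsExpMomentLaw F r) (hα : ∀ k, |α k| ≤ A) (n : ℕ) :
    Summable fun k => α k * coeff n (F ^ k) := by
  refine Summable.of_norm_bounded ((hF.summable_coeff_pow n).mul_left A) fun k => ?_
  rw [Real.norm_eq_abs, abs_mul, abs_of_nonneg (coeff_pow_nonneg hF.coeff_nonneg k n)]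
  exact mul_le_mul_of_nonneg_right (hα k) (coeff_pow_nonneg hF.coeff_nonneg k n)

theorem abs_rpow_mul_tsum_sub_le (hF : IsExpMomentLaw F r) (hα : ∀ k, |α k| ≤ A) {κ η ν ε : ℝ}
    (hη : 0 ≤ η) {n : ℕ} (hn : 1 ≤ n)
    (hwindow : ∀ k : ℕ, |k - ν * n| ≤ ε * n → |(n : ℝ) ^ p * α k - κ| ≤ η) :
    |(n : ℝ) ^ p * ∑' k, α k * coeff n (F ^ k) - κ * ∑' k, coeff n (F ^ k)| ≤
      η * ∑' k, coeff n (F ^ k) + (A + |κ|) * ((n : ℝ) ^ ⌈p⌉₊ *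
        ∑' k, {k : ℕ | ε * n < |k - ν * n|}.indicator (fun k => coeff n (F ^ k)) k) := by
  have hn : (1 : ℝ) ≤ n := by exact_mod_cast hn
  have hsummable := hF.summable_coeff_pow n
  have hlhs := ((hF.summable_mul_coeff_pow hα n).hasSum.mul_left ((n : ℝ) ^ p)).sub
    (hsummable.hasSum.mul_left κ)
  have hrhs := (hsummable.hasSum.mul_left η).add
    ((hsummable.indicator {k : ℕ | ε * n < |k - ν * n|}).hasSum.mul_left
      ((A + |κ|) * (n : ℝ) ^ ⌈p⌉₊))
  rw [← mul_assoc]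
  refine hlhs.norm_le_of_bounded hrhs fun k => ?_
  have hcoeff : 0 ≤ coeff n (F ^ k) := coeff_pow_nonneg hF.coeff_nonneg k n
  rw [← mul_assoc, ← sub_mul, Real.norm_eq_abs, abs_mul, abs_of_nonneg hcoeff]
  by_cases hk : ε * n < |k - ν * n|
  · have hpow : (n : ℝ) ^ p ≤ (n : ℝ) ^ ⌈p⌉₊ := by
      rw [← Real.rpow_natCast]
      exact Real.rpow_le_rpow_of_exponent_le hn (Nat.le_ceil p)
    have hcrude : |(n : ℝ) ^ p * α k - κ| ≤ (A + |κ|) * (n : ℝ) ^ ⌈p⌉₊ := by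
      calc |(n : ℝ) ^ p * α k - κ| ≤ |(n : ℝ) ^ p * α k| + |κ| := abs_sub _ _
        _ = (n : ℝ) ^ p * |α k| + |κ| := by rw [abs_mul, abs_of_nonneg (by positivity)]
        _ ≤ (n : ℝ) ^ ⌈p⌉₊ * A + (n : ℝ) ^ ⌈p⌉₊ * |κ| := by
          gcongr
          · exact hα k
          · exact le_mul_of_one_le_left (abs_nonneg κ) (one_le_pow₀ hn)
        _ = (A + |κ|) * (n : ℝ) ^ ⌈p⌉₊ := by ring
    rw [Set.indicator_of_mem (show k ∈ {k : ℕ | ε * n < |k - ν * n|} from hk)]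
    exact le_add_of_nonneg_of_le (mul_nonneg hη hcoeff) (mul_le_mul_of_nonneg_right hcrude hcoeff)
  · rw [Set.indicator_of_notMem (show k ∉ {k : ℕ | ε * n < |k - ν * n|} from hk), mul_zero,
      add_zero]
    exact mul_le_mul_of_nonneg_right (hwindow k (not_lt.1 hk)) hcoeff

theorem tendsto_rpow_mul_tsum (hF : IsExpMomentLaw F r) (hα : ∀ k, |α k| ≤ A) {K : ℝ}
    (hlim : Tendsto (fun k : ℕ => α k * (k : ℝ) ^ p) atTop (𝓝 K)) :
    Tendsto (fun n : ℕ => (n : ℝ) ^ p * ∑' k, α k * coeff n (F ^ k)) atTop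
      (𝓝 (K * mean F ^ (p - 1))) := by
  set ν := (mean F)⁻¹ with hν_eq
  have hν : 0 < ν := inv_pos.2 hF.mean_pos
  set κ := K * ν ^ (-p)
  have hrenewal : Tendsto (fun n => ∑' k, coeff n (F ^ k)) atTop (𝓝 ν) := hF.tendsto_tsum_coeff_pow
  have hdiff : Tendsto (fun n : ℕ => (n : ℝ) ^ p * ∑' k, α k * coeff n (F ^ k) -
      κ * ∑' k, coeff n (F ^ k)) atTop (𝓝 0) := by
    refine Metric.tendsto_nhds.2 fun e he => ?_
    have hη : 0 < e / (2 * ν) := by positivity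
    obtain ⟨ε, hε, hεν, hwindow⟩ := exists_eventually_abs_rpow_mul_sub_le hν hlim hη
    have hbound := (hrenewal.const_mul (e / (2 * ν))).add
      ((hF.tendsto_pow_mul_tsum_indicator_abs hε hεν ⌈p⌉₊).const_mul (A + |κ|))
    have hlt : e / (2 * ν) * ν + (A + |κ|) * 0 < e := by
      rw [mul_zero, add_zero, div_mul_eq_mul_div, mul_div_mul_right e 2 hν.ne']
      exact half_lt_self he
    filter_upwards [hwindow, hbound.eventually_lt_const hlt, eventually_ge_atTop 1]
      with n hn hsmall hn_one
    rw [Real.dist_0_eq_abs]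
    exact (hF.abs_rpow_mul_tsum_sub_le hα hη.le hn_one hn).trans_lt hsmall
  have hlimit : K * mean F ^ (p - 1) = 0 + κ * ν := by
    rw [zero_add, mul_assoc, hν_eq, Real.inv_rpow hF.mean_pos.le, Real.rpow_neg hF.mean_pos.le,
      inv_inv, Real.rpow_sub_one hF.mean_pos.ne', div_eq_mul_inv]
  rw [hlimit]
  exact (hdiff.add (hrenewal.const_mul κ)).congr fun n => sub_add_cancel _ _

end IsExpMomentLaw

end LocalLimit

/-! ### The tree function -/

section TreeFunction

open PowerSeries Filter Topology

/-- The tree function `∑ₖ kᵏ⁻¹ / k! xᵏ`, the inverse function of `v ↦ v e⁻ᵛ`. Division by zero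
makes its constant coefficient `0`. -/
noncomputable def treeSeries : ℝ⟦X⟧ := PowerSeries.mk fun k => (k : ℝ) ^ k / k.factorial / k

theorem coeff_treeSeries (k : ℕ) : coeff k treeSeries = (k : ℝ) ^ k / k.factorial / k :=
  coeff_mk _ _

theorem coeff_treeSeries_nonneg (k : ℕ) : 0 ≤ coeff k treeSeries := by
  rw [coeff_treeSeries]
  positivity

theorem abs_coeff_treeSeries_mul_pow_le (k : ℕ) :
    |coeff k treeSeries * Real.exp (-1) ^ k| ≤ 1 := by
  rw [abs_of_nonneg (mul_nonneg (coeff_treeSeries_nonneg k) (by positivity)), coeff_treeSeries]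
  obtain rfl | hk := k.eq_zero_or_pos
  · simp
  · have hk : (1 : ℝ) ≤ k := by exact_mod_cast hk
    calc (k : ℝ) ^ k / k.factorial / k * Real.exp (-1) ^ k
        ≤ Real.exp k * Real.exp (-1) ^ k := by
          refine mul_le_mul_of_nonneg_right ?_ (by positivity)
          exact (div_le_self (by positivity) hk).trans
            (Real.pow_div_factorial_le_exp k (by positivity) k)
      _ = 1 := by rw [← Real.exp_nat_mul, ← Real.exp_add, mul_neg_one, add_neg_cancel,
        Real.exp_zero]

theorem tendsto_coeff_treeSeries_mul_pow_mul_rpow :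
    Tendsto (fun k : ℕ => coeff k treeSeries * Real.exp (-1) ^ k * (k : ℝ) ^ (3 / 2 : ℝ)) atTop
      (𝓝 (√2 * √Real.pi)⁻¹) := by
  have hstirling := (Stirling.tendsto_stirlingSeq_sqrt_pi.const_mul (√2)).inv₀
    (by have := Real.pi_pos; positivity)
  refine hstirling.congr' ?_
  filter_upwards [eventually_gt_atTop 0] with k hk
  have hk : (0 : ℝ) < k := by exact_mod_cast hk
  have hrpow : (k : ℝ) ^ (3 / 2 : ℝ) = k * √k := by
    rw [Real.sqrt_eq_rpow, ← Real.rpow_one_add' hk.le (by norm_num)]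
    norm_num
  rw [Stirling.stirlingSeq, coeff_treeSeries, hrpow, Real.sqrt_mul zero_le_two, div_pow,
    Real.exp_neg, inv_pow]
  field_simp

theorem summableAt_treeSeries_exp_neg_one : SummableAt treeSeries (Real.exp (-1)) := by
  have hsummable : Summable fun n : ℕ => (n : ℝ) ^ (-(3 / 2) : ℝ) :=
    Real.summable_nat_rpow.2 (by norm_num)
  have hbigO := tendsto_coeff_treeSeries_mul_pow_mul_rpow.isBigO_one ℝ |>.mul
    (Asymptotics.isBigO_refl (fun n : ℕ => (n : ℝ) ^ (-(3 / 2) : ℝ)) atTop)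
  refine summable_of_isBigO_nat hsummable (hbigO.congr' ?_ ?_)
  · filter_upwards [eventually_gt_atTop 0] with k hk
    have hk : (0 : ℝ) < k := by exact_mod_cast hk
    rw [mul_assoc, ← Real.rpow_add hk, add_neg_cancel, Real.rpow_zero, mul_one]
  · simp only [one_mul, EventuallyEq.refl]

theorem sum_neg_one_pow_mul_choose_mul_pow {n : ℕ} (hn : n ≠ 0) :
    ∑ k ∈ Finset.range (n + 1), ((-1 : ℝ) ^ (n - k) * n.choose k) * (k : ℝ) ^ (n - 1) = 0 := by
  have h := congrFun (fwdDiff_iter_pow_eq_zero_of_lt (R := ℝ) (Nat.sub_one_lt hn)) 0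
  rw [fwdDiff_iter_eq_sum_shift] at h
  simpa using h

theorem sum_antidiagonal_coeff_treeSeries_mul (v : ℝ) (n : ℕ) :
    ∑ p ∈ Finset.HasAntidiagonal.antidiagonal n,
      coeff p.1 treeSeries * v ^ p.1 * ((-(p.1 * v)) ^ p.2 / p.2.factorial) =
        if n = 1 then v else 0 := by
  obtain hn | hn := lt_or_ge n 2
  · interval_cases n <;> simp [coeff_treeSeries, Finset.Nat.antidiagonal_succ]
  · rw [if_neg (by omega), Finset.Nat.sum_antidiagonal_eq_sum_range_succ_mk,
      ← zero_mul (v ^ n / n.factorial),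
      ← sum_neg_one_pow_mul_choose_mul_pow (by omega : n ≠ 0), Finset.sum_mul]
    refine Finset.sum_congr rfl fun k hk => ?_
    have hkn : k ≤ n := Finset.mem_range_succ_iff.1 hk
    obtain rfl | hk := k.eq_zero_or_pos
    · rw [coeff_treeSeries, Nat.cast_zero, zero_pow (by omega : n - 1 ≠ 0)]
      simp only [div_zero, zero_mul, mul_zero]
    · have hk : (k : ℝ) ≠ 0 := by positivity
      have hv : v ^ n = v ^ k * v ^ (n - k) := by rw [← pow_add, Nat.add_sub_cancel' hkn]
      have hkk : (k : ℝ) ^ k * (k : ℝ) ^ (n - k) = k * (k : ℝ) ^ (n - 1) := by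
        rw [← pow_add, ← pow_succ', Nat.add_sub_cancel' hkn, Nat.sub_add_cancel (by omega)]
      rw [coeff_treeSeries, Nat.cast_choose ℝ hkn, hv, neg_pow, mul_pow]
      field_simp
      linear_combination (v ^ k * v ^ (n - k)) * hkk

theorem hasSumAt_treeSeries_mul_exp_neg_of_le {v : ℝ} (hv : 0 ≤ v) (hv' : v ≤ Real.exp (-2)) :
    HasSumAt treeSeries (v * Real.exp (-v)) v := by
  set D : ℕ × ℕ → ℝ := fun p =>
    coeff p.1 treeSeries * v ^ p.1 * ((-(p.1 * v)) ^ p.2 / p.2.factorial)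
  have hexp (k : ℕ) (x : ℝ) : HasSum (fun j => coeff k treeSeries * v ^ k *
      ((k * x) ^ j / j.factorial)) (coeff k treeSeries * (v * Real.exp x) ^ k) := by
    rw [mul_pow, ← Real.exp_nat_mul, ← mul_assoc, Real.exp_eq_exp_ℝ]
    exact (NormedSpace.expSeries_div_hasSum_exp (k * x)).mul_left _
  have hD : Summable D := by
    refine Summable.of_norm ((summable_prod_of_nonneg fun p => norm_nonneg (D p)).2 ?_)
    have hnorm (p : ℕ × ℕ) : ‖D p‖ =
        coeff p.1 treeSeries * v ^ p.1 * ((p.1 * v) ^ p.2 / p.2.factorial) := by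
      simp only [D, norm_mul, norm_div, norm_pow, norm_neg, Real.norm_natCast,
        Real.norm_of_nonneg hv, Real.norm_of_nonneg (coeff_treeSeries_nonneg p.1)]
    simp only [hnorm]
    refine ⟨fun k => (hexp k v).summable, ?_⟩
    simp only [(hexp _ v).tsum_eq]
    refine summableAt_treeSeries_exp_neg_one.of_nonneg_of_le (by positivity) ?_
    calc v * Real.exp v ≤ Real.exp (-2) * Real.exp 1 := by
          gcongr
          exact hv'.trans (Real.exp_le_one_iff.2 (by norm_num))
      _ = Real.exp (-1) := by rw [← Real.exp_add]; norm_num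
  have hrows : HasSumAt treeSeries (v * Real.exp (-v)) (∑' p, D p) :=
    hD.hasSum.prod_fiberwise fun k => by simpa only [D, mul_neg] using hexp k (-v)
  have hdiag : HasSum (fun n : ℕ => if n = 1 then v else 0) (∑' p, D p) := by
    have hsigma := (Finset.HasAntidiagonal.sigmaAntidiagonalEquivProd.hasSum_iff.2 hD.hasSum).sigma
      fun n => Finset.hasSum (Finset.HasAntidiagonal.antidiagonal n) D
    simpa only [D, sum_antidiagonal_coeff_treeSeries_mul] using hsigma
  rwa [hdiag.unique (hasSum_ite_eq 1 v)] at hrows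

theorem mul_exp_neg_le (v : ℝ) : v * Real.exp (-v) ≤ Real.exp (-1) := by
  calc v * Real.exp (-v) ≤ Real.exp (v - 1) * Real.exp (-v) := by
        gcongr
        linarith [Real.add_one_le_exp (v - 1)]
    _ = Real.exp (-1) := by rw [← Real.exp_add]; ring_nf

theorem mul_exp_neg_lt {v : ℝ} (hv : v ≠ 1) : v * Real.exp (-v) < Real.exp (-1) := by
  calc v * Real.exp (-v) < Real.exp (v - 1) * Real.exp (-v) := by
        gcongr
        linarith [Real.add_one_lt_exp (sub_ne_zero.2 hv)]
    _ = Real.exp (-1) := by rw [← Real.exp_add]; ring_nf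

theorem hasSumAt_treeSeries_mul_exp_neg {v : ℝ} (hv : 0 < v) (hv' : v < 1) :
    HasSumAt treeSeries (v * Real.exp (-v)) v := by
  have hsummable {x : ℝ} (hx : 0 ≤ x) (hx' : x ≤ Real.exp (-1)) : SummableAt treeSeries x :=
    summableAt_treeSeries_exp_neg_one.of_nonneg_of_le hx hx'
  have hanalytic : AnalyticOnNhd ℝ (fun w => seriesSum treeSeries (w * Real.exp (-w)))
      (Set.Ioo 0 1) := by
    intro w hw
    have hball := hasFPowerSeriesOnBall_seriesSum (𝕜 := ℝ) (Real.exp_pos (-1))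
      fun x hx hx' => hsummable hx.le hx'.le
    refine AnalyticAt.fun_comp (hball.analyticOnNhd _ ?_) (by fun_prop)
    rw [Metric.eball_ofReal, mem_ball_zero_iff,
      Real.norm_of_nonneg (mul_nonneg hw.1.le (Real.exp_pos _).le)]
    exact mul_exp_neg_lt hw.2.ne
  have heq : Set.EqOn (fun w => seriesSum treeSeries (w * Real.exp (-w))) id (Set.Ioo 0 1) := by
    have hsmall : Real.exp (-2) < 1 := Real.exp_lt_one_iff.2 (by norm_num)
    refine hanalytic.eqOn_of_preconnected_of_eventuallyEq (fun w _ => analyticAt_id)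
      isPreconnected_Ioo (z₀ := Real.exp (-2) / 2) ⟨by positivity, ?_⟩ ?_
    · linarith [Real.exp_pos (-2)]
    · filter_upwards [Ioo_mem_nhds (half_pos (Real.exp_pos (-2))) (half_lt_self (Real.exp_pos _))]
        with w hw
      exact (hasSumAt_treeSeries_mul_exp_neg_of_le hw.1.le hw.2.le).seriesSum_eq
  have hsum := (hsummable (mul_nonneg hv.le (Real.exp_pos _).le) (mul_exp_neg_le v)).hasSumAt
  rwa [show seriesSum treeSeries (v * Real.exp (-v)) = v from heq ⟨hv, hv'⟩] at hsum

end TreeFunction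

/-! ### Singularity analysis of hierarchy counts -/

section HierarchyCount

open PowerSeries Filter Topology

variable {a m : ℕ → ℝ} {j : ℕ} {w x s t K R : ℝ}

theorem exists_isLUB_summableAt {P : ℝ⟦X⟧} (hx : 0 ≤ x) (hP : SummableAt P x)
    (hs : ¬SummableAt P s) (hs₀ : 0 ≤ s) :
    ∃ R ∈ Set.Icc x s, IsLUB {y | 0 ≤ y ∧ SummableAt P y} R := by
  have hle : s ∈ upperBounds {y | 0 ≤ y ∧ SummableAt P y} := fun y hy =>
    le_of_not_ge fun hsy => hs (hy.2.of_nonneg_of_le hs₀ hsy)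
  have hlub := isLUB_csSup (s := {y | 0 ≤ y ∧ SummableAt P y}) ⟨x, hx, hP⟩ ⟨s, hle⟩
  exact ⟨_, ⟨hlub.1 ⟨hx, hP⟩, hlub.2 hle⟩, hlub⟩

theorem SummableAt.of_lt_isLUB {P : ℝ⟦X⟧} (hR : IsLUB {y | 0 ≤ y ∧ SummableAt P y} R)
    (hx : 0 ≤ x) (hxR : x < R) : SummableAt P x := by
  obtain ⟨y, ⟨-, hy⟩, hxy⟩ := (lt_isLUB_iff hR).1 hxR
  exact hy.of_nonneg_of_le hx hxy.le

/-- The power series `∑ₖ A(xᵏ) / k`, where `A` is the generating function of `a`. Its exponential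
is the generating function of multisets of objects counted by `a`. -/
noncomputable def eulerLog (a : ℕ → ℝ) : ℝ⟦X⟧ :=
  PowerSeries.mk fun j => (∑ d ∈ j.divisors, d * a d) / j

/-- The power series `Q` with `eulerLog a = Q + (M - 1) / 2`, where `M` is the generating function
of `m`. For hierarchies, `A` is `M / 2` up to a polynomial, so `Q` consists of a polynomial and the
terms `A(xᵏ) / k` with `2 ≤ k`, and has a larger radius of convergence than `M`. -/
noncomputable def eulerLogRemainder (a m : ℕ → ℝ) : ℝ⟦X⟧ :=
  eulerLog a - C (1 / 2) * (PowerSeries.mk m - 1)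

/-- The power series `B` such that `M / 2` is the tree function of `B`. -/
noncomputable def treeArgument (a m : ℕ → ℝ) : ℝ⟦X⟧ :=
  C (Real.exp (-(1 / 2)) / 2) * seriesComp (exp ℝ) (eulerLogRemainder a m)

theorem sum_properDivisors_div_mul_pow_le (ha : ∀ n, 0 ≤ a n) (hw : 0 ≤ w) (hw₁ : w ≤ 1)
    (hK : ∀ n, a n * (w ^ 2) ^ n ≤ K) (j : ℕ) :
    (∑ d ∈ j.properDivisors, d * a d) / j * w ^ j ≤ j * K := by
  have hK₀ : 0 ≤ K := (mul_nonneg (ha 0) (by positivity)).trans (hK 0)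
  have hterm : ∀ d ∈ j.properDivisors, d * a d * w ^ j ≤ j * K := fun d hd => by
    obtain ⟨⟨k, hk⟩, hdj⟩ := Nat.mem_properDivisors.1 hd
    have hk₂ : 2 ≤ k := by
      by_contra! hk₂
      interval_cases k <;> omega
    calc d * a d * w ^ j = d * (a d * w ^ j) := mul_assoc _ _ _
      _ ≤ d * (a d * (w ^ 2) ^ d) := by
        rw [← pow_mul]
        gcongr ?_ * (?_ * ?_)
        · exact ha d
        · exact pow_le_pow_of_le_one hw hw₁ (by nlinarith)
      _ ≤ j * K := by
        gcongr
        · exact mul_nonneg (ha d) (by positivity)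
        · exact hK d
  have hcard : j.properDivisors.card ≤ j :=
    (Finset.card_filter_le _ _).trans (by rw [Nat.card_Ico]; omega)
  obtain rfl | hj := j.eq_zero_or_pos
  · simp
  · have hj : (0 : ℝ) < j := by exact_mod_cast hj
    rw [div_mul_eq_mul_div, div_le_iff₀ hj, Finset.sum_mul]
    calc ∑ d ∈ j.properDivisors, d * a d * w ^ j ≤ j.properDivisors.card * (j * K) := by
          simpa only [nsmul_eq_mul] using Finset.sum_le_card_nsmul _ _ _ hterm
      _ ≤ j * (j * K) := by gcongr
      _ = j * K * j := by ring

theorem coeff_eulerLogRemainder (hj : j ≠ 0) : coeff j (eulerLogRemainder a m) =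
    (∑ d ∈ j.properDivisors, d * a d) / j + (a j - m j / 2) := by
  have hj' : (j : ℝ) ≠ 0 := Nat.cast_ne_zero.2 hj
  rw [eulerLogRemainder, map_sub, eulerLog, coeff_mk, coeff_C_mul, map_sub, coeff_mk, coeff_one,
    if_neg hj, ← Nat.insert_self_properDivisors hj,
    Finset.sum_insert Nat.self_notMem_properDivisors]
  field_simp
  ring

namespace IsHierarchyCount

theorem forest_one (h : IsHierarchyCount a m) : m 1 = 1 := by
  simpa [h.apply_one, h.forest_zero] using h.mul_forest 1

theorem le_forest (h : IsHierarchyCount a m) (n : ℕ) : a n ≤ m n := by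
  have hn := h.nonneg n
  obtain hlt | hn₃ := lt_or_ge n 3
  · interval_cases n
    · rw [h.apply_zero, h.forest_zero]
      exact zero_le_one
    · rw [h.apply_one, h.forest_one]
    · linarith [h.two_mul_le_forest_two]
  · linarith [h.forest_eq n hn₃]

theorem forest_nonneg (h : IsHierarchyCount a m) (n : ℕ) : 0 ≤ coeff n (PowerSeries.mk m) := by
  rw [coeff_mk]
  exact (h.nonneg n).trans (h.le_forest n)

theorem exists_hasSumAt_forest (h : IsHierarchyCount a m) (hx : 0 ≤ x) (hx₈ : x < 1 / 8) :
    ∃ s ≤ (1 - 8 * x)⁻¹, HasSumAt (PowerSeries.mk m) x s := by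
  have hgeometric := hasSum_geometric_of_lt_one (r := 8 * x) (by positivity) (by linarith)
  have hle (n : ℕ) : coeff n (PowerSeries.mk m) * x ^ n ≤ (8 * x) ^ n := by
    rw [coeff_mk, mul_pow]
    exact mul_le_mul_of_nonneg_right (h.forest_le n) (by positivity)
  have hsummable : SummableAt (PowerSeries.mk m) x := Summable.of_nonneg_of_le
    (fun n => mul_nonneg (h.forest_nonneg n) (by positivity)) hle hgeometric.summable
  exact ⟨_, hasSum_le hle hsummable.hasSumAt hgeometric, hsummable.hasSumAt⟩

theorem one_le_of_hasSumAt_forest (h : IsHierarchyCount a m) (hx : 0 ≤ x)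
    (hs : HasSumAt (PowerSeries.mk m) x s) : 1 ≤ s := by
  simpa only [coeff_mk, h.forest_zero, pow_zero, mul_one] using
    hs.coeff_mul_pow_le h.forest_nonneg hx 0

theorem coeff_eulerLog_nonneg (h : IsHierarchyCount a m) (j : ℕ) : 0 ≤ coeff j (eulerLog a) := by
  rw [eulerLog, coeff_mk]
  exact div_nonneg (Finset.sum_nonneg fun d _ => mul_nonneg d.cast_nonneg (h.nonneg d))
    j.cast_nonneg

theorem coeff_one_eulerLogRemainder (h : IsHierarchyCount a m) :
    coeff 1 (eulerLogRemainder a m) = 1 / 2 := by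
  rw [coeff_eulerLogRemainder one_ne_zero, h.apply_one, h.forest_one, Nat.properDivisors_one,
    Finset.sum_empty]
  norm_num

theorem constantCoeff_eulerLogRemainder (h : IsHierarchyCount a m) :
    constantCoeff (eulerLogRemainder a m) = 0 := by
  rw [← coeff_zero_eq_constantCoeff_apply, eulerLogRemainder, map_sub, eulerLog, coeff_mk,
    coeff_C_mul, map_sub, coeff_mk, h.forest_zero, coeff_zero_one, Nat.cast_zero, div_zero,
    sub_self, mul_zero, sub_zero]

theorem coeff_eulerLogRemainder_mem_Icc (h : IsHierarchyCount a m) (j : ℕ) :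
    coeff j (eulerLogRemainder a m) ∈
      Set.Icc 0 (1 / 2 + (∑ d ∈ j.properDivisors, d * a d) / j) := by
  have hsum : 0 ≤ (∑ d ∈ j.properDivisors, d * a d) / j :=
    div_nonneg (Finset.sum_nonneg fun d _ => mul_nonneg d.cast_nonneg (h.nonneg d)) j.cast_nonneg
  obtain hlt | hj := lt_or_ge j 3
  · interval_cases j
    · rw [coeff_zero_eq_constantCoeff_apply, h.constantCoeff_eulerLogRemainder]
      exact ⟨le_rfl, add_nonneg one_half_pos.le hsum⟩
    · rw [h.coeff_one_eulerLogRemainder]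
      exact ⟨by norm_num, by linarith⟩
    · have hproper : (∑ d ∈ Nat.properDivisors 2, d * a d) / (2 : ℕ) = 1 / 2 := by
        rw [Nat.Prime.sum_properDivisors Nat.prime_two, h.apply_one]
        norm_num
      rw [coeff_eulerLogRemainder two_ne_zero, hproper]
      constructor <;> linarith [h.two_mul_le_forest_two, h.forest_two_le]
  · rw [coeff_eulerLogRemainder (by omega), h.forest_eq j hj]
    constructor <;> linarith

theorem coeff_eulerLogRemainder_nonneg (h : IsHierarchyCount a m) (j : ℕ) :
    0 ≤ coeff j (eulerLogRemainder a m) := (h.coeff_eulerLogRemainder_mem_Icc j).1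

theorem summableAt_eulerLogRemainder (h : IsHierarchyCount a m) (hw : w < 1)
    (hM : SummableAt (PowerSeries.mk m) (w ^ 2)) (hx : 0 ≤ x) (hxw : x < w) :
    SummableAt (eulerLogRemainder a m) x := by
  have hw₀ : 0 < w := hx.trans_lt hxw
  have hle (n : ℕ) : a n * (w ^ 2) ^ n ≤ seriesSum (PowerSeries.mk m) (w ^ 2) := by
    refine le_trans ?_ (hM.hasSumAt.coeff_mul_pow_le h.forest_nonneg (sq_nonneg w) n)
    rw [coeff_mk]
    exact mul_le_mul_of_nonneg_right (h.le_forest n) (by positivity)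
  have hratio : ‖x / w‖ < 1 := by
    rwa [Real.norm_of_nonneg (by positivity), div_lt_one hw₀]
  have hgeometric := (summable_geometric_of_lt_one hx (hxw.trans hw)).mul_left (1 / 2)
  have hgeometric' := (summable_pow_mul_geometric_of_norm_lt_one 1 hratio).mul_right
    (seriesSum (PowerSeries.mk m) (w ^ 2))
  refine Summable.of_nonneg_of_le
    (fun j => mul_nonneg (h.coeff_eulerLogRemainder_nonneg j) (by positivity)) (fun j => ?_)
    (hgeometric.add hgeometric')
  have hpow : x ^ j = w ^ j * (x / w) ^ j := by rw [← mul_pow, mul_div_cancel₀ _ hw₀.ne']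
  calc coeff j (eulerLogRemainder a m) * x ^ j
      ≤ (1 / 2 + (∑ d ∈ j.properDivisors, d * a d) / j) * x ^ j := by
        gcongr
        exact (h.coeff_eulerLogRemainder_mem_Icc j).2
    _ = 1 / 2 * x ^ j + (∑ d ∈ j.properDivisors, d * a d) / j * w ^ j * (x / w) ^ j := by
        rw [add_mul, mul_assoc _ (w ^ j), hpow]
    _ ≤ 1 / 2 * x ^ j + j * seriesSum (PowerSeries.mk m) (w ^ 2) * (x / w) ^ j := by
        gcongr 1 / 2 * x ^ j + ?_ * (x / w) ^ j
        exact sum_properDivisors_div_mul_pow_le h.nonneg hw₀.le hw.le hle j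
    _ = 1 / 2 * x ^ j + j ^ 1 * (x / w) ^ j * seriesSum (PowerSeries.mk m) (w ^ 2) := by ring

theorem mk_forest_eq_seriesComp_exp (h : IsHierarchyCount a m) :
    PowerSeries.mk m = seriesComp (exp ℝ) (eulerLog a) := by
  refine eq_seriesComp_exp ?_ ?_ ?_
  · rw [← coeff_zero_eq_constantCoeff_apply, coeff_mk, h.forest_zero]
  · rw [← coeff_zero_eq_constantCoeff_apply, eulerLog, coeff_mk, Nat.cast_zero, div_zero]
  · ext n
    have hrec := h.mul_forest (n + 1)
    rw [← Finset.Ico_add_one_right_eq_Icc, Finset.sum_Ico_eq_sum_range] at hrec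
    rw [coeff_derivative, coeff_mk, coeff_mul, Finset.Nat.sum_antidiagonal_eq_sum_range_succ_mk,
      mul_comm]
    push_cast at hrec
    refine hrec.trans (Finset.sum_congr rfl fun i _ => ?_)
    rw [coeff_derivative, eulerLog, coeff_mk, coeff_mk, add_comm 1 i, Nat.add_sub_add_right]
    push_cast
    field_simp

theorem coeff_treeArgument_nonneg (h : IsHierarchyCount a m) (n : ℕ) :
    0 ≤ coeff n (treeArgument a m) := by
  rw [treeArgument, coeff_C_mul]
  exact mul_nonneg (by positivity)
    (coeff_seriesComp_nonneg coeff_exp_nonneg h.coeff_eulerLogRemainder_nonneg n)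

theorem coeff_one_treeArgument_pos (h : IsHierarchyCount a m) :
    0 < coeff 1 (treeArgument a m) := by
  rw [treeArgument, coeff_C_mul, coeff_one_seriesComp h.constantCoeff_eulerLogRemainder,
    h.coeff_one_eulerLogRemainder, coeff_exp_real]
  positivity

theorem hasSumAt_treeArgument (h : IsHierarchyCount a m) (hx : 0 ≤ x)
    (ht : HasSumAt (eulerLogRemainder a m) x t) :
    HasSumAt (treeArgument a m) x (Real.exp (-(1 / 2)) / 2 * Real.exp t) :=
  (hasSumAt_C _ x).mul
    (ht.seriesComp coeff_exp_nonneg h.coeff_eulerLogRemainder_nonneg hx (hasSumAt_exp t))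

theorem summableAt_eulerLogRemainder_of_forest (h : IsHierarchyCount a m) (hx : 0 < x)
    (hx₁ : x < 1) (hM : SummableAt (PowerSeries.mk m) x) :
    SummableAt (eulerLogRemainder a m) x :=
  h.summableAt_eulerLogRemainder (w := √x) ((Real.sqrt_lt' one_pos).2 (by rwa [one_pow]))
    (by rwa [Real.sq_sqrt hx.le]) hx.le (Real.lt_sqrt_self_iff.2 ⟨hx.ne', hx₁⟩)

theorem hasSumAt_treeArgument_of_forest (h : IsHierarchyCount a m) (hx : 0 < x) (hx₁ : x < 1)
    (hs : HasSumAt (PowerSeries.mk m) x s) :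
    HasSumAt (treeArgument a m) x (s / 2 * Real.exp (-(s / 2))) := by
  have hQ := (h.summableAt_eulerLogRemainder_of_forest hx hx₁ hs.summableAt).hasSumAt
  set t := seriesSum (eulerLogRemainder a m) x
  have hlog : HasSumAt (eulerLog a) x (t + 1 / 2 * (s - 1)) := by
    have hsum := hQ.add ((hasSumAt_C (1 / 2) x).mul (hs.sub (hasSumAt_C 1 x)))
    rwa [eulerLogRemainder, map_one, sub_add_cancel] at hsum
  have hexp : s = Real.exp (t + 1 / 2 * (s - 1)) := by
    refine HasSum.unique hs ?_
    rw [h.mk_forest_eq_seriesComp_exp]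
    exact hlog.seriesComp coeff_exp_nonneg h.coeff_eulerLog_nonneg hx.le (hasSumAt_exp _)
  convert h.hasSumAt_treeArgument hx.le hQ using 1
  calc s / 2 * Real.exp (-(s / 2))
      = Real.exp (t + 1 / 2 * (s - 1)) / 2 * Real.exp (-(s / 2)) := by rw [← hexp]
    _ = Real.exp (t + 1 / 2 * (s - 1) + -(s / 2)) / 2 := by
      rw [Real.exp_add _ (-(s / 2)), div_mul_eq_mul_div]
    _ = Real.exp (-(1 / 2) + t) / 2 := by ring_nf
    _ = Real.exp (-(1 / 2)) / 2 * Real.exp t := by rw [Real.exp_add, div_mul_eq_mul_div]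

theorem not_summableAt_forest_half (h : IsHierarchyCount a m) :
    ¬SummableAt (PowerSeries.mk m) (1 / 2) := by
  intro hM
  have hQ := (h.summableAt_eulerLogRemainder_of_forest (by norm_num) (by norm_num) hM).hasSumAt
  set t := seriesSum (eulerLogRemainder a m) (1 / 2)
  have ht : 1 / 4 ≤ t := by
    have hle := hQ.coeff_mul_pow_le h.coeff_eulerLogRemainder_nonneg (by norm_num) 1
    rw [h.coeff_one_eulerLogRemainder] at hle
    linarith
  have hB : Real.exp (-(1 / 2)) / 2 * Real.exp t ≤ Real.exp (-1) := by
    rw [HasSum.unique (h.hasSumAt_treeArgument (by norm_num) hQ)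
      (h.hasSumAt_treeArgument_of_forest (by norm_num) (by norm_num) hM.hasSumAt)]
    exact mul_exp_neg_le _
  have hexp : Real.exp (t + 1 / 2) ≤ 2 := by
    rw [div_mul_eq_mul_div, div_le_iff₀ two_pos, ← Real.exp_add] at hB
    calc Real.exp (t + 1 / 2) = Real.exp (-(1 / 2) + t) * Real.exp 1 := by
          rw [← Real.exp_add]; ring_nf
      _ ≤ Real.exp (-1) * 2 * Real.exp 1 := by gcongr
      _ = 2 := by rw [mul_right_comm, ← Real.exp_add, neg_add_cancel, Real.exp_zero, one_mul]
  have hlog : t + 1 / 2 ≤ Real.log 2 := (Real.le_log_iff_exp_le two_pos).2 hexp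
  linarith [Real.log_two_lt_d9]

theorem exists_isLUB_summableAt_forest (h : IsHierarchyCount a m) :
    ∃ R ∈ Set.Ioo (0 : ℝ) 1, IsLUB {x | 0 ≤ x ∧ SummableAt (PowerSeries.mk m) x} R := by
  obtain ⟨s, -, hs⟩ := h.exists_hasSumAt_forest (x := 1 / 9) (by norm_num) (by norm_num)
  obtain ⟨R, hR, hlub⟩ := exists_isLUB_summableAt (by norm_num) hs.summableAt
    h.not_summableAt_forest_half (by norm_num)
  exact ⟨R, ⟨by linarith [hR.1], by linarith [hR.2]⟩, hlub⟩

theorem hasSumAt_seriesComp_treeSeries (h : IsHierarchyCount a m) (hx : 0 ≤ x)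
    (hs : HasSumAt (treeArgument a m) x s) (hs₁ : s ≤ Real.exp (-1)) :
    HasSumAt (seriesComp treeSeries (treeArgument a m)) x (seriesSum treeSeries s) :=
  hs.seriesComp coeff_treeSeries_nonneg h.coeff_treeArgument_nonneg hx
    (summableAt_treeSeries_exp_neg_one.of_nonneg_of_le
      (hs.nonneg h.coeff_treeArgument_nonneg hx) hs₁).hasSumAt

theorem mk_forest_eq_seriesComp_treeSeries (h : IsHierarchyCount a m) :
    PowerSeries.mk m = C 2 * seriesComp treeSeries (treeArgument a m) := by
  refine eq_of_eventually_hasSumAt (𝕜 := ℝ) ?_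
  filter_upwards [Ioo_mem_nhdsGT (show (0 : ℝ) < 1 / 16 by norm_num)] with x ⟨hx, hx₁⟩
  obtain ⟨s, hs_le, hs⟩ := h.exists_hasSumAt_forest hx.le (by linarith)
  have hs₁ : 1 ≤ s := h.one_le_of_hasSumAt_forest hx.le hs
  have hs₂ : s < 2 := by
    refine hs_le.trans_lt ?_
    rw [inv_lt_comm₀ (by linarith) two_pos]
    linarith
  have htree := h.hasSumAt_seriesComp_treeSeries hx.le
    (h.hasSumAt_treeArgument_of_forest hx (by linarith) hs) (mul_exp_neg_le _)
  rw [(hasSumAt_treeSeries_mul_exp_neg (by linarith) (by linarith)).seriesSum_eq] at htree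
  refine ⟨s, hs, ?_⟩
  rw [← mul_div_cancel₀ s (two_ne_zero' ℝ)]
  exact (hasSumAt_C 2 x).mul htree

theorem summableAt_treeArgument (h : IsHierarchyCount a m) (hR₁ : R < 1)
    (hR : IsLUB {x | 0 ≤ x ∧ SummableAt (PowerSeries.mk m) x} R) (hx : 0 ≤ x) (hxR : x < √R) :
    SummableAt (treeArgument a m) x := by
  obtain ⟨w, hxw, hwR⟩ := exists_between hxR
  have hw : 0 ≤ w := hx.trans hxw.le
  have hwR' : w ^ 2 < R := (Real.lt_sqrt hw).1 hwR
  have hQ := h.summableAt_eulerLogRemainder (by nlinarith)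
    (.of_lt_isLUB hR (sq_nonneg w) hwR') hx hxw
  exact (h.hasSumAt_treeArgument hx hQ.hasSumAt).summableAt

theorem seriesSum_treeArgument_eq_exp_neg_one (h : IsHierarchyCount a m)
    (hR₀ : 0 < R) (hR₁ : R < 1)
    (hR : IsLUB {x | 0 ≤ x ∧ SummableAt (PowerSeries.mk m) x} R) :
    seriesSum (treeArgument a m) R = Real.exp (-1) := by
  have hR_sqrt : R < √R := Real.lt_sqrt_self_iff.2 ⟨hR₀.ne', hR₁⟩
  have hcont : ContinuousAt (seriesSum (treeArgument a m)) R := by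
    refine ((differentiableOn_seriesSum fun x hx hxR =>
      h.summableAt_treeArgument hR₁ hR hx.le hxR).continuousOn).continuousAt
      (Metric.isOpen_ball.mem_nhds ?_)
    rwa [mem_ball_zero_iff, Real.norm_of_nonneg hR₀.le]
  refine le_antisymm ?_ (le_of_not_gt fun hlt => ?_)
  · refine le_of_tendsto (hcont.tendsto.mono_left (nhdsWithin_le_nhds (s := Set.Iio R))) ?_
    filter_upwards [Ioo_mem_nhdsLT hR₀] with x hx
    have hM := (SummableAt.of_lt_isLUB hR hx.1.le hx.2).hasSumAt
    rw [(h.hasSumAt_treeArgument_of_forest hx.1 (hx.2.trans hR₁) hM).seriesSum_eq]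
    exact mul_exp_neg_le _
  · have hgt := (hcont.eventually (gt_mem_nhds hlt)).filter_mono
      (nhdsWithin_le_nhds (s := Set.Ioi R))
    obtain ⟨x, hx_lt, hRx, hx⟩ := (hgt.and (Ioo_mem_nhdsGT hR_sqrt)).exists
    have hx₀ : 0 ≤ x := hR₀.le.trans hRx.le
    have htree := h.hasSumAt_seriesComp_treeSeries hx₀
      (h.summableAt_treeArgument hR₁ hR hx₀ hx).hasSumAt hx_lt.le
    have hM : SummableAt (PowerSeries.mk m) x := by
      rw [h.mk_forest_eq_seriesComp_treeSeries]
      exact ((hasSumAt_C 2 x).mul htree).summableAt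
    exact hRx.not_ge (hR.1 ⟨hx₀, hM⟩)

theorem exists_isExpMomentLaw (h : IsHierarchyCount a m) (hR₀ : 0 < R) (hR₁ : R < 1)
    (hR : IsLUB {x | 0 ≤ x ∧ SummableAt (PowerSeries.mk m) x} R) :
    ∃ r, IsExpMomentLaw (C (Real.exp 1) * rescale R (treeArgument a m)) r := by
  have hR_sqrt : R < √R := Real.lt_sqrt_self_iff.2 ⟨hR₀.ne', hR₁⟩
  have hscaled {x : ℝ} (hx : 0 ≤ x) (hxR : R * x < √R) :=
    (hasSumAt_C (Real.exp 1) x).mul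
      (h.summableAt_treeArgument hR₁ hR (mul_nonneg hR₀.le hx) hxR).hasSumAt.rescale
  obtain ⟨r, hr₁, hr⟩ := exists_between ((one_lt_div hR₀).2 hR_sqrt)
  refine ⟨r, fun n => ?_, ?_, ?_, hr₁, ?_⟩
  · rw [coeff_C_mul, coeff_rescale]
    have := h.coeff_treeArgument_nonneg n
    positivity
  · rw [coeff_C_mul, coeff_rescale]
    have := h.coeff_one_treeArgument_pos
    positivity
  · have hone := hscaled zero_le_one (by rwa [mul_one])
    rwa [mul_one, h.seriesSum_treeArgument_eq_exp_neg_one hR₀ hR₁ hR, ← Real.exp_add,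
      add_neg_cancel, Real.exp_zero] at hone
  · exact (hscaled (zero_le_one.trans hr₁.le) (by rwa [mul_comm, ← lt_div_iff₀ hR₀])).summableAt

theorem tsum_coeff_treeSeries_mul_coeff_pow (h : IsHierarchyCount a m) (n : ℕ) :
    ∑' k, coeff k treeSeries * Real.exp (-1) ^ k *
      coeff n ((C (Real.exp 1) * rescale R (treeArgument a m)) ^ k) = m n / 2 * R ^ n := by
  have hcoeff : m n = 2 * ∑' k, coeff k treeSeries * coeff n (treeArgument a m ^ k) := by
    simpa only [coeff_mk, coeff_C_mul, seriesComp] using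
      congrArg (coeff n) h.mk_forest_eq_seriesComp_treeSeries
  have hexp (k : ℕ) : Real.exp (-1) ^ k * Real.exp 1 ^ k = 1 := by
    rw [← mul_pow, ← Real.exp_add, neg_add_cancel, Real.exp_zero, one_pow]
  rw [hcoeff, mul_div_cancel_left₀ _ two_ne_zero, ← tsum_mul_right]
  refine tsum_congr fun k => ?_
  rw [mul_pow, ← map_pow, ← map_pow, coeff_C_mul, coeff_rescale]
  linear_combination (coeff k treeSeries * coeff n (treeArgument a m ^ k) * R ^ n) * hexp k

theorem exists_tendsto_mul_pow_mul_rpow (h : IsHierarchyCount a m) :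
    ∃ C R : ℝ, 0 < C ∧ R ∈ Set.Ioo (0 : ℝ) 1 ∧
      Tendsto (fun n : ℕ => a n * R ^ n * (n : ℝ) ^ (3 / 2 : ℝ)) atTop (𝓝 C) := by
  obtain ⟨R, hR₀₁, hR⟩ := h.exists_isLUB_summableAt_forest
  obtain ⟨r, hlaw⟩ := h.exists_isExpMomentLaw hR₀₁.1 hR₀₁.2 hR
  have hlim := hlaw.tendsto_rpow_mul_tsum abs_coeff_treeSeries_mul_pow_le
    tendsto_coeff_treeSeries_mul_pow_mul_rpow
  refine ⟨_, R, ?_, hR₀₁, hlim.congr' ?_⟩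
  · have := hlaw.mean_pos
    have := Real.pi_pos
    positivity
  · filter_upwards [eventually_ge_atTop 3] with n hn
    rw [h.tsum_coeff_treeSeries_mul_coeff_pow, h.forest_eq n hn]
    ring

theorem exists_tendsto_div (h : IsHierarchyCount a m) :
    ∃ C R : ℝ, 0 < C ∧ R ∈ Set.Ioo (0 : ℝ) 1 ∧
      Tendsto (fun n : ℕ => a n / (C * R ^ (-(n : ℝ)) * (n : ℝ) ^ (-(3 / 2) : ℝ))) atTop (𝓝 1) := by
  obtain ⟨C, R, hC, hR, hlim⟩ := h.exists_tendsto_mul_pow_mul_rpow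
  refine ⟨C, R, hC, hR, ?_⟩
  rw [← div_self hC.ne']
  refine (hlim.div_const C).congr fun n => ?_
  rw [Real.rpow_neg hR.1.le, Real.rpow_natCast, Real.rpow_neg n.cast_nonneg, div_mul_eq_div_div,
    div_mul_eq_div_div, div_inv_eq_mul, div_inv_eq_mul, div_mul_eq_mul_div, div_mul_eq_mul_div]

end IsHierarchyCount

end HierarchyCount

/-- **Moon.** There are constants `C₀ > 0`, `ρ₀ ∈ (0,1)`, `C₂ > 0`, `ρ₂ ∈ (0,1)` with
`Hₙ ~ C₀ ρ₀⁻ⁿ n^{-3/2}` and `H⁽²⁾ₙ ~ C₂ ρ₂⁻ⁿ n^{-3/2}` as `n → ∞`. -/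
theorem moon_asymptotics :
    ∃ (C₀ ρ₀ C₂ ρ₂ : ℝ), 0 < C₀ ∧ ρ₀ ∈ Set.Ioo (0 : ℝ) 1 ∧ 0 < C₂ ∧ ρ₂ ∈ Set.Ioo (0 : ℝ) 1 ∧
      Filter.Tendsto
        (fun n : ℕ => (hierarchyCount n : ℝ) /
          (C₀ * ρ₀ ^ (-(n : ℝ)) * (n : ℝ) ^ (-(3 / 2) : ℝ)))
        Filter.atTop (nhds 1) ∧
      Filter.Tendsto
        (fun n : ℕ => (hierarchyCountNoSize2 n : ℝ) /
          (C₂ * ρ₂ ^ (-(n : ℝ)) * (n : ℝ) ^ (-(3 / 2) : ℝ)))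
        Filter.atTop (nhds 1) := by
  obtain ⟨C₀, ρ₀, hC₀, hρ₀, hlim₀⟩ :=
    (isHierarchyCount_ncard (Set.empty_subset _)).exists_tendsto_div
  obtain ⟨C₂, ρ₂, hC₂, hρ₂, hlim₂⟩ := (isHierarchyCount_ncard subset_rfl).exists_tendsto_div
  refine ⟨C₀, ρ₀, C₂, ρ₂, hC₀, hρ₀, hC₂, hρ₂, ?_, ?_⟩
  · simpa only [hierarchyCount_eq_ncard] using hlim₀
  · simpa only [hierarchyCountNoSize2_eq_ncard] using hlim₂
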